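/- arXiv:1602.02961 — 4 statements merged into one kernel-verified Lean document; each statement's English description precedes it below -/
import Mathlib

section
/- Let Ω ⊆ ℝ² be an open set and u : Ω → ℝ² a smooth (C^∞) vector field such that |u(x)| = 1 for every x ∈ Ω and ∂₁u₂ − ∂₂u₁ = 0 in Ω. Then for every ξ = (ξ₁, ξ₂) ∈ S¹ and every φ ∈ C_c^∞(Ω), one has ∫_Ω χ(x, ξ) (ξ^⊥ · ∇φ(x)) dx = 0, where ξ^⊥ = (−ξ₂, ξ₁). -/
open MeasureTheory Metric Set Filter
open scoped RealInnerProductSpace ENNReal Topology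

noncomputable section

/-- `χ(x, ξ) = 1` if `u(x)·ξ > 0` and `0` otherwise. -/
def chi {N : ℕ} (u : EuclideanSpace ℝ (Fin N) → EuclideanSpace ℝ (Fin N))
    (x ξ : EuclideanSpace ℝ (Fin N)) : ℝ :=
  if 0 < ⟪u x, ξ⟫ then 1 else 0

/-- The kinetic formulation: for every unit direction `ξ`, every `v ⊥ ξ` and every
test function `φ ∈ C_c^∞(Ω)`, `∫_Ω χ(x,ξ) (v·∇φ(x)) dx = 0`. -/
def KineticFormulation {N : ℕ} (Ω : Set (EuclideanSpace ℝ (Fin N)))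
    (u : EuclideanSpace ℝ (Fin N) → EuclideanSpace ℝ (Fin N)) : Prop :=
  ∀ ξ : EuclideanSpace ℝ (Fin N), ‖ξ‖ = 1 →
    ∀ v : EuclideanSpace ℝ (Fin N), ⟪v, ξ⟫ = 0 →
      ∀ φ : EuclideanSpace ℝ (Fin N) → ℝ, ContDiff ℝ (⊤ : ℕ∞) φ → HasCompactSupport φ →
        tsupport φ ⊆ Ω →
        ∫ x in Ω, chi u x ξ * ⟪v, gradient φ x⟫ = 0

/-- `x₀` is a Lebesgue point of `f` with value `f₀`. -/
def IsLebesguePoint {E : Type*} [MeasureSpace E] [PseudoMetricSpace E]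
    {F : Type*} [NormedAddCommGroup F]
    (f : E → F) (x₀ : E) (f₀ : F) : Prop :=
  Tendsto (fun r : ℝ => ⨍ x in Metric.ball x₀ r, ‖f x - f₀‖) (𝓝[>] 0) (𝓝 0)

/-!
The rotation `ξ^⊥ = perp ξ` satisfies `‖w‖² ξ^⊥ = (w·ξ) w^⊥ + (w·ξ^⊥) w`. Differentiating
`‖u‖² = 1` gives `u · Du = 0`; as `u` is curl free, `Du` is symmetric, so `Du` kills `u`. Taking
`w = u(x)` yields `∂_{ξ^⊥} (u·ξ) = (u·ξ) g` with `g = (Du u^⊥)·ξ` continuous: the sign of `f = u·ξ`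
is transported along `ξ^⊥`.

Analytically, `∂_v f = f g` makes every `C¹` function `η` satisfy the renormalized identity
`∫ η(f) ∂_v φ + η'(f) f g φ = 0`. Applied to `c f`, with `η` a smooth step that is constant outside
`[0, 1]`, it passes to the limit `c → ∞`: `η(c f)` converges to the indicator of `{f > 0}`, while
`η'(c f) c f` is bounded and converges to `0`, also where `f = 0`.
-/

/-- The rotation `ξ ↦ ξ^⊥ = (-ξ₂, ξ₁)` of the plane by a quarter turn, giving the
direction along which the sign of `u·ξ` is transported; coordinates are indexed from `0`. -/
def perp (ξ : EuclideanSpace ℝ (Fin 2)) : EuclideanSpace ℝ (Fin 2) :=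
  !₂[-ξ 1, ξ 0]

section SmoothStep

lemma deriv_smoothTransition_eq_zero {s : ℝ} (hs : s ∉ Icc (0 : ℝ) 1) :
    deriv Real.smoothTransition s = 0 := by
  rcases lt_or_ge s 0 with hneg | hnonneg
  · have hzero : Real.smoothTransition =ᶠ[𝓝 s] fun _ => 0 := by
      filter_upwards [gt_mem_nhds hneg] with t ht
      exact Real.smoothTransition.zero_of_nonpos ht.le
    rw [hzero.deriv_eq, deriv_const]
  · have hone : Real.smoothTransition =ᶠ[𝓝 s] fun _ => 1 := by
      filter_upwards [lt_mem_nhds (not_le.1 fun h => hs ⟨hnonneg, h⟩)] with t ht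
      exact Real.smoothTransition.one_of_one_le ht.le
    rw [hone.deriv_eq, deriv_const]

lemma hasCompactSupport_deriv_smoothTransition :
    HasCompactSupport (deriv Real.smoothTransition) :=
  .intro isCompact_Icc fun _ => deriv_smoothTransition_eq_zero

lemma exists_norm_deriv_smoothTransition_mul_self_le :
    ∃ B, ∀ s, ‖deriv Real.smoothTransition s * s‖ ≤ B :=
  have hcont : Continuous (deriv Real.smoothTransition) :=
    (Real.smoothTransition.contDiff (n := 1)).continuous_deriv le_rfl
  (hcont.mul continuous_id).bounded_above_of_compact_support
    hasCompactSupport_deriv_smoothTransition.mul_right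

lemma eventually_smoothTransition_mul_eq_ite (a : ℝ) :
    ∀ᶠ c : ℝ in atTop, Real.smoothTransition (c * a) = if 0 < a then 1 else 0 := by
  split_ifs with ha
  · filter_upwards [(tendsto_id.atTop_mul_const ha).eventually_ge_atTop 1] with c hc
    exact Real.smoothTransition.one_of_one_le hc
  · filter_upwards [eventually_ge_atTop 0] with c hc
    exact Real.smoothTransition.zero_of_nonpos
      (mul_nonpos_of_nonneg_of_nonpos hc (not_lt.1 ha))

lemma eventually_apply_mul_mul_eq_zero {k : ℝ → ℝ} (hk : HasCompactSupport k) (a : ℝ) :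
    ∀ᶠ c : ℝ in atTop, k (c * a) * (c * a) = 0 := by
  rcases eq_or_ne a 0 with rfl | ha
  · simp
  · have hlim : Tendsto (fun c : ℝ => c * a) atTop (cocompact ℝ) :=
      (tendsto_cocompact_mul_right₀ ha).mono_left atTop_le_cocompact
    rw [hasCompactSupport_iff_eventuallyEq, coclosedCompact_eq_cocompact] at hk
    filter_upwards [hlim.eventually hk] with c hc
    rw [hc, Pi.zero_apply, zero_mul]

lemma tendsto_integral_smoothTransition_mul_add {X : Type*} [MeasurableSpace X] {μ : Measure X}
    {f a b : X → ℝ} (hf : AEStronglyMeasurable f μ) (ha : Integrable a μ) (hb : Integrable b μ) :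
    Tendsto (fun c : ℝ => ∫ x, (Real.smoothTransition (c * f x) * a x
        + deriv Real.smoothTransition (c * f x) * (c * f x) * b x) ∂μ) atTop
      (𝓝 (∫ x, (if 0 < f x then 1 else 0) * a x ∂μ)) := by
  obtain ⟨B, hB⟩ := exists_norm_deriv_smoothTransition_mul_self_le
  refine tendsto_integral_filter_of_dominated_convergence (fun x => ‖a x‖ + B * ‖b x‖)
    (.of_forall fun c => ?_) (.of_forall fun c => .of_forall fun x => ?_)
    (ha.norm.add (hb.norm.const_mul B)) (.of_forall fun x => ?_)
  · have hcf : AEStronglyMeasurable (fun x => c * f x) μ := hf.const_mul c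
    have hderiv : Continuous (deriv Real.smoothTransition) :=
      (Real.smoothTransition.contDiff (n := 1)).continuous_deriv le_rfl
    exact ((Real.smoothTransition.continuous.comp_aestronglyMeasurable hcf).mul ha.1).add
      (((hderiv.comp_aestronglyMeasurable hcf).mul hcf).mul hb.1)
  · refine (norm_add_le _ _).trans (add_le_add ?_ ?_)
    · rw [norm_mul, Real.norm_of_nonneg (Real.smoothTransition.nonneg _)]
      exact mul_le_of_le_one_left (norm_nonneg _) (Real.smoothTransition.le_one _)
    · rw [norm_mul]
      gcongr
      exact hB _
  · refine tendsto_const_nhds.congr' ?_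
    filter_upwards [eventually_smoothTransition_mul_eq_ite (f x),
      eventually_apply_mul_mul_eq_zero hasCompactSupport_deriv_smoothTransition (f x)]
      with c hstep hderiv
    rw [hstep, hderiv, zero_mul, add_zero]

end SmoothStep

section DirectionalDerivative

variable {E : Type*} [NormedAddCommGroup E] [NormedSpace ℝ E] [FiniteDimensional ℝ E]
  [MeasurableSpace E] [BorelSpace E] {μ : Measure E} [μ.IsAddHaarMeasure] {Ω : Set E} {v : E}

lemma integral_fderiv_apply_eq_zero {G : Type*} [NormedAddCommGroup G] [NormedSpace ℝ G]
    {F : E → G} (hF : Differentiable ℝ F) (hint : Integrable F μ)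
    (hint' : Integrable (fun x => fderiv ℝ F x v) μ) :
    ∫ x, fderiv ℝ F x v ∂μ = 0 := by
  simpa using integral_smul_fderiv_eq_neg_fderiv_smul_of_integrable (𝕜 := ℝ)
    (f := fun _ => 1) (g := F) (μ := μ) (v := v) (by simp) (by simpa) (by simpa)
    (by fun_prop) (fun x _ => hF x)

lemma setIntegral_fderiv_apply_eq_zero {G : Type*} [NormedAddCommGroup G] [NormedSpace ℝ G]
    {F : E → G} (hF : ContDiff ℝ 1 F) (hsupp : HasCompactSupport F) (hsub : tsupport F ⊆ Ω) :
    ∫ x in Ω, fderiv ℝ F x v ∂μ = 0 := by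
  rw [setIntegral_eq_integral_of_forall_compl_eq_zero fun x hx => by
    rw [fderiv_of_notMem_tsupport ℝ (fun h => hx (hsub h)), zero_apply]]
  have hcont : Continuous fun x => fderiv ℝ F x v :=
    (hF.continuous_fderiv one_ne_zero).clm_apply continuous_const
  exact integral_fderiv_apply_eq_zero (hF.differentiable one_ne_zero)
    (hF.continuous.integrable_of_hasCompactSupport hsupp)
    (hcont.integrable_of_hasCompactSupport (hsupp.fderiv_apply (𝕜 := ℝ) v))

variable {f g φ : E → ℝ}

lemma setIntegral_comp_mul_fderiv_add_eq_zero {η : ℝ → ℝ} (hη : ContDiff ℝ 1 η)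
    (hΩ : IsOpen Ω) (hf : ContDiffOn ℝ 1 f Ω) (hfg : ∀ x ∈ Ω, fderiv ℝ f x v = f x * g x)
    (hφ : ContDiff ℝ 1 φ) (hsupp : HasCompactSupport φ) (hsub : tsupport φ ⊆ Ω) :
    ∫ x in Ω, (η (f x) * fderiv ℝ φ x v + deriv η (f x) * f x * (φ x * g x)) ∂μ = 0 := by
  have hsub' : tsupport (fun x => φ x * η (f x)) ⊆ tsupport φ := tsupport_mul_subset_left
  have hF : ContDiff ℝ 1 fun x => φ x * η (f x) :=
    contMDiff_iff_contDiff.1 <| contMDiff_of_tsupport fun x hx =>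
      (hφ.contDiffAt.mul <| hη.contDiffAt.comp x <|
        hf.contDiffAt (hΩ.mem_nhds (hsub (hsub' hx)))).contMDiffAt
  rw [← setIntegral_fderiv_apply_eq_zero (μ := μ) (v := v) hF hsupp.mul_right (hsub'.trans hsub)]
  refine setIntegral_congr_fun hΩ.measurableSet fun x hx => ?_
  have hfx : HasFDerivAt f (fderiv ℝ f x) x :=
    ((hf.contDiffAt (hΩ.mem_nhds hx)).differentiableAt one_ne_zero).hasFDerivAt
  have hηx : HasDerivAt η (deriv η (f x)) (f x) :=
    (hη.differentiable one_ne_zero _).hasDerivAt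
  have hφx : HasFDerivAt φ (fderiv ℝ φ x) x := (hφ.differentiable one_ne_zero x).hasFDerivAt
  have hprod : HasFDerivAt (fun x => φ x * η (f x)) _ x :=
    hφx.mul (hηx.comp_hasFDerivAt x hfx)
  simp only [hprod.fderiv, add_apply, smul_apply, smul_eq_mul, hfg x hx]
  ring

theorem setIntegral_ite_pos_mul_fderiv_eq_zero
    (hΩ : IsOpen Ω) (hf : ContDiffOn ℝ 1 f Ω) (hg : ContinuousOn g Ω)
    (hfg : ∀ x ∈ Ω, fderiv ℝ f x v = f x * g x)
    (hφ : ContDiff ℝ 1 φ) (hsupp : HasCompactSupport φ) (hsub : tsupport φ ⊆ Ω) :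
    ∫ x in Ω, (if 0 < f x then 1 else 0) * fderiv ℝ φ x v ∂μ = 0 := by
  have hzero (c : ℝ) : ∫ x in Ω, (Real.smoothTransition (c * f x) * fderiv ℝ φ x v
      + deriv Real.smoothTransition (c * f x) * (c * f x) * (φ x * g x)) ∂μ = 0 := by
    refine setIntegral_comp_mul_fderiv_add_eq_zero Real.smoothTransition.contDiff hΩ
      (contDiffOn_const.mul hf) (fun x hx => ?_) hφ hsupp hsub
    rw [fderiv_const_mul ((hf.contDiffAt (hΩ.mem_nhds hx)).differentiableAt one_ne_zero),
      smul_apply, hfg x hx, smul_eq_mul, mul_assoc]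
  have hφ' : Continuous fun x => fderiv ℝ φ x v :=
    (hφ.continuous_fderiv one_ne_zero).clm_apply continuous_const
  have hφg : Continuous fun x => φ x * g x :=
    (hφ.continuous.continuousOn.mul hg).continuous_of_tsupport_subset hΩ
      (tsupport_mul_subset_left.trans hsub)
  have hφ'int : Integrable (fun x => fderiv ℝ φ x v) μ :=
    hφ'.integrable_of_hasCompactSupport (hsupp.fderiv_apply (𝕜 := ℝ) v)
  have hφgint : Integrable (fun x => φ x * g x) μ :=
    hφg.integrable_of_hasCompactSupport hsupp.mul_right
  have hlim := tendsto_integral_smoothTransition_mul_add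
    (hf.continuousOn.aestronglyMeasurable (μ := μ) hΩ.measurableSet) hφ'int.integrableOn
    hφgint.integrableOn
  simp only [hzero] at hlim
  exact tendsto_nhds_unique hlim tendsto_const_nhds

end DirectionalDerivative

lemma inner_fderiv_eq_zero_of_norm_eventually_eq {E F : Type*} [NormedAddCommGroup E]
    [NormedSpace ℝ E] [NormedAddCommGroup F] [InnerProductSpace ℝ F] {u : E → F} {x : E} {r : ℝ}
    (hu : DifferentiableAt ℝ u x) (hr : ∀ᶠ y in 𝓝 x, ‖u y‖ = r) (w : E) :
    ⟪u x, fderiv ℝ u x w⟫ = 0 := by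
  have hconst : (fun y => ⟪u y, u y⟫) =ᶠ[𝓝 x] fun _ => r ^ 2 := by
    filter_upwards [hr] with y hy
    rw [real_inner_self_eq_norm_sq, hy]
  have hderiv := fderiv_inner_apply ℝ hu hu w
  rw [hconst.fderiv_eq, fderiv_const_apply, zero_apply,
    real_inner_comm (u x)] at hderiv
  linarith

section Plane

lemma continuous_perp : Continuous perp := by
  unfold perp
  fun_prop

lemma norm_sq_smul_perp (w ξ : EuclideanSpace ℝ (Fin 2)) :
    ‖w‖ ^ 2 • perp ξ = ⟪w, ξ⟫ • perp w + ⟪w, perp ξ⟫ • w := by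
  ext i
  fin_cases i <;> simp [perp, PiLp.inner_apply, EuclideanSpace.real_norm_sq_eq] <;> ring

lemma isSymmetric_of_apply_single_eq
    {T : EuclideanSpace ℝ (Fin 2) →ₗ[ℝ] EuclideanSpace ℝ (Fin 2)}
    (hT : T (EuclideanSpace.single 0 1) 1 = T (EuclideanSpace.single 1 1) 0) :
    T.IsSymmetric := by
  have hdecomp (w : EuclideanSpace ℝ (Fin 2)) :
      T w = w 0 • T (EuclideanSpace.single 0 1) + w 1 • T (EuclideanSpace.single 1 1) := by
    rw [← map_smul, ← map_smul, ← map_add]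
    congr 1
    ext i
    fin_cases i <;> simp
  intro x y
  rw [hdecomp x, hdecomp y]
  simp only [PiLp.inner_apply, Fin.sum_univ_two, PiLp.add_apply, PiLp.smul_apply, smul_eq_mul,
    RCLike.inner_apply, conj_trivial, hT]
  ring

variable {u : EuclideanSpace ℝ (Fin 2) → EuclideanSpace ℝ (Fin 2)} {x : EuclideanSpace ℝ (Fin 2)}

lemma fderiv_apply_self_eq_zero (hu : DifferentiableAt ℝ u x) {r : ℝ}
    (hr : ∀ᶠ y in 𝓝 x, ‖u y‖ = r)
    (hcurl : fderiv ℝ (fun y => u y 1) x (EuclideanSpace.single 0 1)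
      - fderiv ℝ (fun y => u y 0) x (EuclideanSpace.single 1 1) = 0) :
    fderiv ℝ u x (u x) = 0 := by
  have hcoord (i : Fin 2) (w : EuclideanSpace ℝ (Fin 2)) :
      fderiv ℝ (fun y => u y i) x w = fderiv ℝ u x w i :=
    DFunLike.congr_fun
      ((EuclideanSpace.proj (𝕜 := ℝ) i).hasFDerivAt.comp x hu.hasFDerivAt).fderiv w
  rw [hcoord, hcoord, sub_eq_zero] at hcurl
  have hsymm : (fderiv ℝ u x : _ →ₗ[ℝ] _).IsSymmetric := isSymmetric_of_apply_single_eq hcurl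
  refine ext_inner_right ℝ fun w => ?_
  rw [inner_zero_left]
  exact (hsymm (u x) w).trans (inner_fderiv_eq_zero_of_norm_eventually_eq hu hr w)

lemma fderiv_apply_perp (hu : DifferentiableAt ℝ u x) (hunit : ∀ᶠ y in 𝓝 x, ‖u y‖ = 1)
    (hcurl : fderiv ℝ (fun y => u y 1) x (EuclideanSpace.single 0 1)
      - fderiv ℝ (fun y => u y 0) x (EuclideanSpace.single 1 1) = 0)
    (ξ : EuclideanSpace ℝ (Fin 2)) :
    fderiv ℝ u x (perp ξ) = ⟪u x, ξ⟫ • fderiv ℝ u x (perp (u x)) := by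
  have hdecomp := norm_sq_smul_perp (u x) ξ
  rw [hunit.self_of_nhds, one_pow, one_smul] at hdecomp
  rw [hdecomp, map_add, map_smul, map_smul, fderiv_apply_self_eq_zero hu hunit hcurl, smul_zero,
    add_zero]

end Plane

theorem kinetic_formulation_2d_general
    (Ω : Set (EuclideanSpace ℝ (Fin 2))) (hΩ : IsOpen Ω)
    (u : EuclideanSpace ℝ (Fin 2) → EuclideanSpace ℝ (Fin 2))
    (hu : ContDiffOn ℝ 1 u Ω)
    (hunit : ∀ x ∈ Ω, ‖u x‖ = 1)
    (hcurl : ∀ x ∈ Ω,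
      fderiv ℝ (fun y => u y 1) x (EuclideanSpace.single 0 1)
        - fderiv ℝ (fun y => u y 0) x (EuclideanSpace.single 1 1) = 0)
    (ξ : EuclideanSpace ℝ (Fin 2))
    (φ : EuclideanSpace ℝ (Fin 2) → ℝ) (hφ : ContDiff ℝ 1 φ)
    (hsupp : HasCompactSupport φ) (hsub : tsupport φ ⊆ Ω) :
    ∫ x in Ω, chi u x ξ * ⟪perp ξ, gradient φ x⟫ = 0 := by
  have hdiff : ∀ x ∈ Ω, DifferentiableAt ℝ u x := fun x hx =>
    (hu.contDiffAt (hΩ.mem_nhds hx)).differentiableAt one_ne_zero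
  have hfactor : ∀ x ∈ Ω, fderiv ℝ (fun y => ⟪u y, ξ⟫) x (perp ξ)
      = ⟪u x, ξ⟫ * ⟪fderiv ℝ u x (perp (u x)), ξ⟫ := fun x hx => by
    rw [fderiv_inner_apply ℝ (hdiff x hx) (differentiableAt_const ξ), fderiv_const_apply,
      zero_apply, inner_zero_right, zero_add,
      fderiv_apply_perp (hdiff x hx) (eventually_of_mem (hΩ.mem_nhds hx) hunit) (hcurl x hx),
      real_inner_smul_left]
  have hcont : ContinuousOn (fun x => ⟪fderiv ℝ u x (perp (u x)), ξ⟫) Ω :=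
    ((hu.continuousOn_fderiv_of_isOpen hΩ le_rfl).clm_apply
      (continuous_perp.comp_continuousOn hu.continuousOn)).inner continuousOn_const
  simp only [inner_gradient_right, conj_trivial, chi]
  exact setIntegral_ite_pos_mul_fderiv_eq_zero hΩ (hu.inner ℝ contDiffOn_const) hcont hfactor
    hφ hsupp hsub

theorem kinetic_formulation_2d
    (Ω : Set (EuclideanSpace ℝ (Fin 2))) (hΩ : IsOpen Ω)
    (u : EuclideanSpace ℝ (Fin 2) → EuclideanSpace ℝ (Fin 2))
    (hu : ContDiffOn ℝ (⊤ : ℕ∞) u Ω)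
    (hunit : ∀ x ∈ Ω, ‖u x‖ = 1)
    (hcurl : ∀ x ∈ Ω,
      fderiv ℝ (fun y => u y 1) x (EuclideanSpace.single 0 1)
        - fderiv ℝ (fun y => u y 0) x (EuclideanSpace.single 1 1) = 0)
    (ξ : EuclideanSpace ℝ (Fin 2)) (hξ : ‖ξ‖ = 1)
    (φ : EuclideanSpace ℝ (Fin 2) → ℝ) (hφ : ContDiff ℝ (⊤ : ℕ∞) φ)
    (hsupp : HasCompactSupport φ) (hsub : tsupport φ ⊆ Ω) :
    ∫ x in Ω, chi u x ξ *
      ⟪(WithLp.equiv 2 (Fin 2 → ℝ)).symm ![-ξ 1, ξ 0], gradient φ x⟫ = 0 := by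
  exact kinetic_formulation_2d_general Ω hΩ u (hu.of_le (by simp)) hunit hcurl ξ φ
    (hφ.of_le (by simp)) hsupp hsub
end
end

section
/- Let Ω = {x = (x₁, x₂, x₃) ∈ ℝ³ : x₂ > 1} and u₀(x) = (x₁, x₂, 0)/√(x₁² + x₂²). Then u₀ is smooth on Ω, |u₀| = 1 on Ω, and u₀ is curl-free on Ω; nevertheless u₀ does not satisfy the kinetic formulation: for ξ = (1, 0, 1)/√2 and v = (−1, 0, 1)/√2 (so that v·ξ = 0), there exists φ ∈ C_c^∞(Ω) with ∫_Ω χ(x, ξ) (v·∇φ(x)) dx ≠ 0, where χ(x, ξ) = 1 if u₀(x)·ξ > 0 and χ(x, ξ) = 0 otherwise. -/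
open MeasureTheory Metric Set Filter
open scoped RealInnerProductSpace ENNReal Topology

noncomputable section

/-- The half-space . -/
def Omega3 : Set (EuclideanSpace ℝ (Fin 3)) := {x | 1 < x 1}

/-- The vortex-line vector field . -/
def u0 (x : EuclideanSpace ℝ (Fin 3)) : EuclideanSpace ℝ (Fin 3) :=
  (WithLp.equiv 2 (Fin 3 → ℝ)).symm
    ![x 0 / Real.sqrt (x 0 ^ 2 + x 1 ^ 2), x 1 / Real.sqrt (x 0 ^ 2 + x 1 ^ 2), 0]

/-- . -/
def xi3 : EuclideanSpace ℝ (Fin 3) :=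
  (WithLp.equiv 2 (Fin 3 → ℝ)).symm ![1 / Real.sqrt 2, 0, 1 / Real.sqrt 2]

/-- . -/
def v3 : EuclideanSpace ℝ (Fin 3) :=
  (WithLp.equiv 2 (Fin 3 → ℝ)).symm ![-(1 / Real.sqrt 2), 0, 1 / Real.sqrt 2]

/-! The field `u0` is the gradient of the distance to the axis `ℝ e₂`, so its derivative is a
Hessian and hence symmetric. On the other hand `{u0 · ξ > 0}` is the half-space `{x₀ > 0}`, whose
indicator jumps along `v`. To see the jump, test against a radially decreasing bump centred on the
boundary plane: tangential derivatives of the bump integrate to zero over the half-space by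
translation invariance, while its derivative along the normal is nonpositive there and not
identically zero. -/

section Gradient

variable {E : Type*} [NormedAddCommGroup E] [InnerProductSpace ℝ E] [CompleteSpace E]

lemma inner_fderiv_comm_of_hasGradientAt {ψ : E → ℝ} {F : E → E} {x : E}
    (hψ : ∀ᶠ y in 𝓝 x, HasGradientAt ψ (F y) y) (hF : DifferentiableAt ℝ F x) (v w : E) :
    ⟪fderiv ℝ F x v, w⟫ = ⟪fderiv ℝ F x w, v⟫ := by
  have hF' : HasFDerivAt (fun y => innerSL ℝ (F y)) ((innerSL ℝ).comp (fderiv ℝ F x)) x :=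
    (innerSL ℝ).hasFDerivAt.comp x hF.hasFDerivAt
  exact second_derivative_symmetric_of_eventually
    (hψ.mono fun _ h => h.hasFDerivAt) hF' v w

lemma fderiv_apply_comm_of_hasGradientAt {ι : Type*} [Fintype ι] [DecidableEq ι]
    {ψ : EuclideanSpace ℝ ι → ℝ} {F : EuclideanSpace ℝ ι → EuclideanSpace ℝ ι}
    {x : EuclideanSpace ℝ ι} (hψ : ∀ᶠ y in 𝓝 x, HasGradientAt ψ (F y) y)
    (hF : DifferentiableAt ℝ F x) (i j : ι) :
    fderiv ℝ (fun y => F y j) x (EuclideanSpace.single i 1)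
      = fderiv ℝ (fun y => F y i) x (EuclideanSpace.single j 1) := by
  have hcoord (k : ι) (w : EuclideanSpace ℝ ι) :
      fderiv ℝ (fun y => F y k) x w = ⟪fderiv ℝ F x w, EuclideanSpace.single k 1⟫ := by
    have hcomp : HasFDerivAt (fun y => F y k) ((EuclideanSpace.proj k).comp (fderiv ℝ F x)) x :=
      (EuclideanSpace.proj (𝕜 := ℝ) k).hasFDerivAt.comp x hF.hasFDerivAt
    simp [hcomp.fderiv, EuclideanSpace.inner_single_right]
  rw [hcoord, hcoord, inner_fderiv_comm_of_hasGradientAt hψ hF]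

lemma hasGradientAt_norm {x : E} (hx : x ≠ 0) :
    HasGradientAt (fun y : E => ‖y‖) (‖x‖⁻¹ • x) x := by
  have hsqrt := (hasStrictFDerivAt_norm_sq x).hasFDerivAt.sqrt (by simpa using hx)
  simp only [Real.sqrt_sq (norm_nonneg _)] at hsqrt
  refine hsqrt.congr_fderiv ?_
  ext w
  simp only [one_div, mul_inv_rev, smul_apply, coe_innerSL_apply, nsmul_eq_mul, Nat.cast_ofNat,
    smul_eq_mul, map_smul, InnerProductSpace.toDual_apply_apply]
  field_simp

end Gradient

section RadialField

variable {E : Type*} [NormedAddCommGroup E] [InnerProductSpace ℝ E]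
  (K : Submodule ℝ E) [K.HasOrthogonalProjection]

/-- The unit vector field pointing radially away from the subspace `K`; its value on `K` is the
junk value `0`. -/
def radialField (x : E) : E := ‖Kᗮ.starProjection x‖⁻¹ • Kᗮ.starProjection x

variable {K}

lemma starProjection_orthogonal_ne_zero {x : E} (hx : x ∉ K) : Kᗮ.starProjection x ≠ 0 := by
  rwa [Ne, Submodule.starProjection_apply_eq_zero_iff, Submodule.orthogonal_orthogonal]

lemma norm_radialField {x : E} (hx : x ∉ K) : ‖radialField K x‖ = 1 :=
  norm_smul_inv_norm (𝕜 := ℝ) (starProjection_orthogonal_ne_zero hx)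

lemma contDiffAt_radialField {x : E} {n : WithTop ℕ∞} (hx : x ∉ K) :
    ContDiffAt ℝ n (radialField K) x := by
  have hne := starProjection_orthogonal_ne_zero hx
  have hP : ContDiffAt ℝ n (fun y => Kᗮ.starProjection y) x := Kᗮ.starProjection.contDiff.contDiffAt
  exact ((hP.norm ℝ hne).inv (norm_ne_zero_iff.2 hne)).smul hP

lemma hasGradientAt_norm_starProjection_orthogonal [CompleteSpace E] {x : E} (hx : x ∉ K) :
    HasGradientAt (fun y => ‖Kᗮ.starProjection y‖) (radialField K x) x := by
  have hcomp := (hasGradientAt_norm (starProjection_orthogonal_ne_zero hx)).hasFDerivAt.comp x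
    Kᗮ.starProjection.hasFDerivAt
  refine hcomp.congr_fderiv ?_
  ext w
  simp only [ContinuousLinearMap.comp_apply, InnerProductSpace.toDual_apply_apply, radialField,
    real_inner_smul_left, Submodule.inner_starProjection_left_eq_right,
    Submodule.starProjection_eq_self_iff.2 (Submodule.starProjection_apply_mem _ _)]

end RadialField

section LineDerivative

variable {E : Type*} [NormedAddCommGroup E] [NormedSpace ℝ E] [MeasurableSpace E] [BorelSpace E]
  {μ : Measure E}

lemma integrable_fderiv_apply [IsFiniteMeasureOnCompacts μ] {φ : E → ℝ} (hφ : ContDiff ℝ 1 φ)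
    (hφc : HasCompactSupport φ) (v : E) : Integrable (fun x => fderiv ℝ φ x v) μ :=
  ((hφ.continuous_fderiv one_ne_zero).clm_apply continuous_const).integrable_of_hasCompactSupport
    (hφc.fderiv_apply ℝ v)

lemma setIntegral_fderiv_eq_zero_of_add_smul_mem_iff [FiniteDimensional ℝ E] [μ.IsAddHaarMeasure]
    {S : Set E} (hS : MeasurableSet S) {v : E} (hv : ∀ x, ∀ t : ℝ, x + t • v ∈ S ↔ x ∈ S)
    {φ : E → ℝ} (hφ : ContDiff ℝ 1 φ) (hφc : HasCompactSupport φ) :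
    ∫ x in S, fderiv ℝ φ x v ∂μ = 0 := by
  have hline (x : E) :
      HasLineDerivAt ℝ (S.indicator φ) (S.indicator (fun y => fderiv ℝ φ y v) x) x v := by
    by_cases hx : x ∈ S
    · simpa [HasLineDerivAt, Set.indicator, hv, hx] using
        (hφ.differentiable one_ne_zero x).hasFDerivAt.hasLineDerivAt v
    · simpa [HasLineDerivAt, Set.indicator, hv, hx] using hasDerivAt_const (0 : ℝ) (0 : ℝ)
  have hint : Integrable (S.indicator φ) μ :=
    (hφ.continuous.integrable_of_hasCompactSupport hφc).indicator hS
  have hint' : Integrable (S.indicator fun y => fderiv ℝ φ y v) μ :=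
    (integrable_fderiv_apply hφ hφc v).indicator hS
  rw [← integral_indicator hS]
  simpa using integral_bilinear_hasLineDerivAt_right_eq_neg_left_of_integrable
    (μ := μ) (f := fun _ => (1 : ℝ)) (f' := fun _ => 0) (B := ContinuousLinearMap.mul ℝ ℝ)
    (by simp) (by simpa using hint') (by simpa using hint)
    (fun x _ => hasDerivAt_const (0 : ℝ) (1 : ℝ)) (fun x _ => hline x)

end LineDerivative

section RadialBump

variable {E : Type*} [NormedAddCommGroup E]

/-- A smooth, radially decreasing bump centred at `p` and supported in the closed ball of
radius `r`. Its gradient, unlike that of a `ContDiffBump`, is explicit. -/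
def radialBump (p : E) (r : ℝ) (x : E) : ℝ := expNegInvGlue (r ^ 2 - ‖x - p‖ ^ 2)

lemma tsupport_radialBump_subset (p : E) {r : ℝ} (hr : 0 ≤ r) :
    tsupport (radialBump p r) ⊆ closedBall p r := by
  refine closure_minimal (fun x hx => ?_) isClosed_closedBall
  have hpos : 0 < r ^ 2 - ‖x - p‖ ^ 2 := not_le.1 (mt expNegInvGlue.zero_of_nonpos hx)
  rw [mem_closedBall_iff_norm]
  exact (sq_le_sq₀ (norm_nonneg _) hr).1 (by linarith)

lemma hasCompactSupport_radialBump [ProperSpace E] (p : E) {r : ℝ} (hr : 0 ≤ r) :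
    HasCompactSupport (radialBump p r) :=
  (isCompact_closedBall p r).of_isClosed_subset (isClosed_tsupport _)
    (tsupport_radialBump_subset p hr)

variable [InnerProductSpace ℝ E]

lemma contDiff_radialBump (p : E) (r : ℝ) {n : ℕ∞} : ContDiff ℝ n (radialBump p r) :=
  expNegInvGlue.contDiff.comp (contDiff_const.sub ((contDiff_id.sub contDiff_const).norm_sq ℝ))

lemma hasDerivAt_expNegInvGlue (t : ℝ) :
    HasDerivAt expNegInvGlue ((t⁻¹) ^ 2 * expNegInvGlue t) t := by
  simpa using expNegInvGlue.hasDerivAt_polynomial_eval_inv_mul 1 t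

lemma fderiv_radialBump_apply (p : E) (r : ℝ) (x v : E) :
    fderiv ℝ (radialBump p r) x v
      = -(2 * ⟪x - p, v⟫ * ((r ^ 2 - ‖x - p‖ ^ 2)⁻¹ ^ 2 * radialBump p r x)) := by
  have hradius : HasFDerivAt (fun y => r ^ 2 - ‖y - p‖ ^ 2) _ x :=
    ((hasFDerivAt_id x).sub_const p).norm_sq.const_sub (r ^ 2)
  have h := (hasDerivAt_expNegInvGlue (r ^ 2 - ‖x - p‖ ^ 2)).comp_hasFDerivAt x hradius
  refine (congrArg (fun L => L v) h.fderiv).trans ?_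
  simp only [radialBump, id_eq, ContinuousLinearMap.comp_id, neg_apply, smul_apply,
    coe_innerSL_apply, nsmul_eq_mul, Nat.cast_ofNat, smul_eq_mul]
  ring

lemma fderiv_radialBump_nonpos (p : E) (r : ℝ) {x v : E} (hxv : 0 ≤ ⟪x - p, v⟫) :
    fderiv ℝ (radialBump p r) x v ≤ 0 := by
  have hbump : 0 ≤ radialBump p r x := expNegInvGlue.nonneg _
  rw [fderiv_radialBump_apply, neg_nonpos]
  positivity

lemma fderiv_radialBump_neg {p : E} {r : ℝ} {x v : E} (hx : x ∈ ball p r)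
    (hxv : 0 < ⟪x - p, v⟫) : fderiv ℝ (radialBump p r) x v < 0 := by
  rw [mem_ball_iff_norm] at hx
  have hradius : 0 < r ^ 2 - ‖x - p‖ ^ 2 := sub_pos.2 (by gcongr)
  have hbump : 0 < radialBump p r x := expNegInvGlue.pos_of_pos hradius
  rw [fderiv_radialBump_apply, neg_lt_zero]
  positivity

end RadialBump

section HalfSpace

variable {E : Type*} [NormedAddCommGroup E] [InnerProductSpace ℝ E]

lemma isOpen_setOf_lt_inner (n : E) (c : ℝ) : IsOpen {x : E | c < ⟪n, x⟫} :=
  isOpen_lt continuous_const (by fun_prop)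

lemma ball_inter_halfSpace_nonempty {n : E} (hn : n ≠ 0) (p : E) {r : ℝ} (hr : 0 < r) :
    (ball p r ∩ {x | ⟪n, p⟫ < ⟪n, x⟫}).Nonempty := by
  have : 0 < ‖n‖ := norm_pos_iff.2 hn
  have : 0 < ⟪n, n⟫ := real_inner_self_pos.2 hn
  refine ⟨p + (r / (2 * ‖n‖)) • n, ?_, ?_⟩
  · rw [mem_ball_iff_norm, add_sub_cancel_left, norm_smul, Real.norm_of_nonneg (by positivity)]
    field_simp
    linarith
  · change ⟪n, p⟫ < ⟪n, p + (r / (2 * ‖n‖)) • n⟫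
    rw [inner_add_right, real_inner_smul_right]
    exact lt_add_of_pos_right _ (by positivity)

variable [FiniteDimensional ℝ E] [MeasurableSpace E] [BorelSpace E] {μ : Measure E}
  [μ.IsAddHaarMeasure]

lemma setIntegral_halfSpace_fderiv_eq_mul_normal {n : E} (hn : n ≠ 0)
    (c : ℝ) {φ : E → ℝ} (hφ : ContDiff ℝ 1 φ) (hφc : HasCompactSupport φ) (v : E) :
    ∫ x in {x | c < ⟪n, x⟫}, fderiv ℝ φ x v ∂μ
      = ⟪n, v⟫ / ⟪n, n⟫ * ∫ x in {x | c < ⟪n, x⟫}, fderiv ℝ φ x n ∂μ := by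
  set a := ⟪n, v⟫ / ⟪n, n⟫
  have htangent : ⟪n, v - a • n⟫ = 0 := by
    rw [inner_sub_right, inner_smul_right, div_mul_cancel₀ _ (inner_self_ne_zero.2 hn), sub_self]
  have hzero : ∫ x in {x | c < ⟪n, x⟫}, fderiv ℝ φ x (v - a • n) ∂μ = 0 :=
    setIntegral_fderiv_eq_zero_of_add_smul_mem_iff (isOpen_setOf_lt_inner n c).measurableSet
      (fun x t => by simp [inner_add_right, inner_smul_right, htangent]) hφ hφc
  have hint := integrable_fderiv_apply (μ := μ) hφ hφc
  simp only [map_sub, map_smul, smul_eq_mul] at hzero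
  rwa [integral_sub (hint v).integrableOn ((hint n).const_mul a).integrableOn, integral_const_mul,
    sub_eq_zero] at hzero

lemma setIntegral_halfSpace_fderiv_radialBump_neg {n : E} (hn : n ≠ 0) (p : E) {r : ℝ}
    (hr : 0 < r) : ∫ x in {x | ⟪n, p⟫ < ⟪n, x⟫}, fderiv ℝ (radialBump p r) x n ∂μ < 0 := by
  have hopen := isOpen_setOf_lt_inner n ⟪n, p⟫
  have hinner {x : E} (hx : ⟪n, p⟫ < ⟪n, x⟫) : 0 < ⟪x - p, n⟫ := by
    rwa [real_inner_comm, inner_sub_right, sub_pos]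
  have hnonneg : ∀ x ∈ {x | ⟪n, p⟫ < ⟪n, x⟫}, 0 ≤ -fderiv ℝ (radialBump p r) x n :=
    fun x hx => neg_nonneg.2 (fderiv_radialBump_nonpos p r (hinner hx).le)
  have hint : Integrable (fun x => fderiv ℝ (radialBump p r) x n) μ :=
    integrable_fderiv_apply (contDiff_radialBump p r) (hasCompactSupport_radialBump p hr.le) n
  rw [← neg_pos, ← integral_neg, setIntegral_pos_iff_support_of_nonneg_ae
    (ae_restrict_of_forall_mem hopen.measurableSet hnonneg) hint.neg.integrableOn]
  refine ((isOpen_ball.inter hopen).measure_pos μ (ball_inter_halfSpace_nonempty hn p hr)).trans_le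
    (measure_mono fun x hx => ⟨?_, hx.2⟩)
  exact neg_ne_zero.2 (fderiv_radialBump_neg hx.1 (hinner hx.2)).ne

lemma exists_setIntegral_halfSpace_fderiv_ne_zero {n v p : E} (hnv : ⟪n, v⟫ ≠ 0) {U : Set E}
    (hU : U ∈ 𝓝 p) :
    ∃ φ : E → ℝ, ContDiff ℝ (⊤ : ℕ∞) φ ∧ HasCompactSupport φ ∧ tsupport φ ⊆ U ∧
      ∫ x in {x | ⟪n, p⟫ < ⟪n, x⟫}, fderiv ℝ φ x v ∂μ ≠ 0 := by
  have hn : n ≠ 0 := by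
    rintro rfl
    exact hnv (inner_zero_left v)
  obtain ⟨r, hr, hrU⟩ := nhds_basis_closedBall.mem_iff.1 hU
  have hsupp := hasCompactSupport_radialBump p hr.le
  refine ⟨radialBump p r, contDiff_radialBump p r, hsupp,
    (tsupport_radialBump_subset p hr.le).trans hrU, ?_⟩
  rw [setIntegral_halfSpace_fderiv_eq_mul_normal hn _ (contDiff_radialBump p r) hsupp]
  exact mul_ne_zero (div_ne_zero hnv (inner_self_ne_zero.2 hn))
    (setIntegral_halfSpace_fderiv_radialBump_neg hn p hr).ne

end HalfSpace

section Kinetic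

variable {N : ℕ} {Ω : Set (EuclideanSpace ℝ (Fin N))}
  {u : EuclideanSpace ℝ (Fin N) → EuclideanSpace ℝ (Fin N)}

lemma setIntegral_chi_mul_inner_gradient {S : Set (EuclideanSpace ℝ (Fin N))}
    {ξ : EuclideanSpace ℝ (Fin N)}
    (hS : MeasurableSet S) (huS : ∀ x ∈ Ω, 0 < ⟪u x, ξ⟫ ↔ x ∈ S)
    {φ : EuclideanSpace ℝ (Fin N) → ℝ} (hφ : tsupport φ ⊆ Ω) (v : EuclideanSpace ℝ (Fin N)) :
    ∫ x in Ω, chi u x ξ * ⟪v, gradient φ x⟫ = ∫ x in S, fderiv ℝ φ x v := by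
  have hgrad (x : EuclideanSpace ℝ (Fin N)) : ⟪v, gradient φ x⟫ = fderiv ℝ φ x v := by
    rw [real_inner_comm, gradient, InnerProductSpace.toDual_symm_apply]
  have hzero {x : EuclideanSpace ℝ (Fin N)} (hx : x ∉ Ω) : fderiv ℝ φ x = 0 :=
    fderiv_of_notMem_tsupport ℝ fun h => hx (hφ h)
  rw [setIntegral_eq_integral_of_forall_compl_eq_zero fun x hx => by simp [hgrad, hzero hx],
    ← integral_indicator hS]
  refine integral_congr_ae (.of_forall fun x => ?_)
  by_cases hx : x ∈ Ω
  · by_cases hxS : x ∈ S <;> simp [chi, huS x hx, hgrad, hxS]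
  · by_cases hxS : x ∈ S <;> simp [hgrad, hzero hx, hxS]

lemma exists_setIntegral_chi_ne_zero_of_halfSpace {ξ n v p : EuclideanSpace ℝ (Fin N)}
    (hΩ : Ω ∈ 𝓝 p) (hu : ∀ x ∈ Ω, 0 < ⟪u x, ξ⟫ ↔ ⟪n, p⟫ < ⟪n, x⟫) (hnv : ⟪n, v⟫ ≠ 0) :
    ∃ φ : EuclideanSpace ℝ (Fin N) → ℝ, ContDiff ℝ (⊤ : ℕ∞) φ ∧ HasCompactSupport φ ∧
      tsupport φ ⊆ Ω ∧ ∫ x in Ω, chi u x ξ * ⟪v, gradient φ x⟫ ≠ 0 := by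
  obtain ⟨φ, hφ, hφc, hφΩ, hne⟩ :=
    exists_setIntegral_halfSpace_fderiv_ne_zero (μ := volume) hnv hΩ
  refine ⟨φ, hφ, hφc, hφΩ, ?_⟩
  rwa [setIntegral_chi_mul_inner_gradient (isOpen_setOf_lt_inner n _).measurableSet hu hφΩ]

end Kinetic

section VortexLine

/-- The vortex line of `u0`: the `x₂`-axis, with indices starting from `0`. -/
abbrev vortexLine : Submodule ℝ (EuclideanSpace ℝ (Fin 3)) := ℝ ∙ EuclideanSpace.single 2 1

lemma starProjection_vortexLine_orthogonal (x : EuclideanSpace ℝ (Fin 3)) :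
    vortexLineᗮ.starProjection x = !₂[x 0, x 1, 0] := by
  rw [Submodule.starProjection_orthogonal_val,
    Submodule.starProjection_unit_singleton ℝ (by simp)]
  ext i
  fin_cases i <;> simp [EuclideanSpace.inner_single_left]

lemma u0_eq_radialField : u0 = radialField vortexLine := by
  ext x i
  rw [radialField, starProjection_vortexLine_orthogonal]
  fin_cases i <;>
    simp [u0, EuclideanSpace.norm_eq, Fin.sum_univ_three, div_eq_inv_mul]

lemma notMem_vortexLine {x : EuclideanSpace ℝ (Fin 3)} (hx : x ∈ Omega3) : x ∉ vortexLine := by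
  intro hmem
  obtain ⟨a, rfl⟩ := Submodule.mem_span_singleton.1 hmem
  have : (1 : ℝ) < 0 := by simpa [Omega3] using hx
  linarith

lemma isOpen_Omega3 : IsOpen Omega3 :=
  isOpen_lt continuous_const (by fun_prop)

lemma inner_u0_xi3_pos_iff (x : EuclideanSpace ℝ (Fin 3)) : 0 < ⟪u0 x, xi3⟫ ↔ 0 < x 0 := by
  have hinner : ⟪u0 x, xi3⟫ = (√2)⁻¹ * (x 0 / √(x 0 ^ 2 + x 1 ^ 2)) := by
    simp [PiLp.inner_apply, Fin.sum_univ_three, u0, xi3]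
  rw [hinner, mul_pos_iff_of_pos_left (by positivity)]
  refine ⟨fun h => ?_, fun h => by positivity⟩
  exact lt_of_not_ge fun hle => h.not_ge (div_nonpos_of_nonpos_of_nonneg hle (Real.sqrt_nonneg _))

lemma inner_v3_xi3 : ⟪v3, xi3⟫ = 0 := by
  simp [PiLp.inner_apply, Fin.sum_univ_three, v3, xi3]

end VortexLine

theorem vortex_line_counterexample :
    ContDiffOn ℝ (⊤ : ℕ∞) u0 Omega3 ∧
    (∀ x ∈ Omega3, ‖u0 x‖ = 1) ∧
    (∀ x ∈ Omega3, ∀ i j : Fin 3,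
      fderiv ℝ (fun y => u0 y j) x (EuclideanSpace.single i 1)
        = fderiv ℝ (fun y => u0 y i) x (EuclideanSpace.single j 1)) ∧
    ⟪v3, xi3⟫ = 0 ∧
    ∃ φ : EuclideanSpace ℝ (Fin 3) → ℝ, ContDiff ℝ (⊤ : ℕ∞) φ ∧ HasCompactSupport φ ∧
      tsupport φ ⊆ Omega3 ∧
      ∫ x in Omega3, chi u0 x xi3 * ⟪v3, gradient φ x⟫ ≠ 0 := by
  refine ⟨?_, ?_, ?_, inner_v3_xi3,
    exists_setIntegral_chi_ne_zero_of_halfSpace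
      (n := EuclideanSpace.single 0 1) (p := EuclideanSpace.single 1 2)
      (isOpen_Omega3.mem_nhds (by simp [Omega3]))
      (fun x _ => by simpa [EuclideanSpace.inner_single_left] using inner_u0_xi3_pos_iff x)
      (by simp [v3, EuclideanSpace.inner_single_left])⟩
  all_goals rw [u0_eq_radialField]
  · exact fun x hx => (contDiffAt_radialField (notMem_vortexLine hx)).contDiffWithinAt
  · exact fun x hx => norm_radialField (notMem_vortexLine hx)
  · exact fun x hx => fderiv_apply_comm_of_hasGradientAt
      ((isOpen_Omega3.eventually_mem hx).mono fun _ hy =>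
        hasGradientAt_norm_starProjection_orthogonal (notMem_vortexLine hy))
      ((contDiffAt_radialField (notMem_vortexLine hx)).differentiableAt one_ne_zero)
end
end

section
/- Let N ≥ 3, Ω ⊆ ℝ^N an open set, and ψ : Ω → ℝ a smooth function such that the gradient field u = ∇ψ satisfies the kinetic formulation. Assume that for some α ∈ ℝ, |∇ψ(x)| ≠ 0 for every x in the level set {x ∈ Ω : ψ(x) = α}, and let S be a connected component of this level set. Then S is locally contained in a sphere or a hyperplane: for every x ∈ S there exists an open neighborhood U of x such that either S ∩ U is contained in some Euclidean sphere {y ∈ ℝ^N : |y − c| = R} (c ∈ ℝ^N, R > 0), or S ∩ U is contained in some affine hyperplane {y ∈ ℝ^N : y·ν = c} (ν ∈ S^{N−1}, c ∈ ℝ). -/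
open MeasureTheory Metric Set Filter
open scoped RealInnerProductSpace ENNReal Topology

noncomputable section

/-!
Mollifying `χ(·, ξ)` shows that it cannot jump along a segment orthogonal to `ξ`. Tilting `ξ`
slightly, it follows that `u y` lies in the span of `u x` and `y - x`, so the lines `x + ℝ u(x)` are
pairwise coplanar. In dimension at least three, pairwise coplanar lines which are not all coplanar
are either concurrent or parallel. Hence near a point `x` there is `κ` such that `u z = ∇ψ(z)` is
parallel to `u x + κ (z - x)`, half the gradient of the quadratic polynomial
`2 ⟪u x, z - x⟫ + κ ‖z - x‖²`, which is therefore constant on the level set of `ψ` through `x`: the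
level set is contained in a sphere if `κ ≠ 0` and in a hyperplane if `κ = 0`.
-/

theorem eq_of_fderiv_apply_sub_eq_zero_on_segment {E F : Type*} [NormedAddCommGroup E]
    [NormedSpace ℝ E] [NormedAddCommGroup F] [NormedSpace ℝ F] {f : E → F} {x y : E}
    (hf : ∀ p ∈ segment ℝ x y, DifferentiableAt ℝ f p)
    (hf' : ∀ p ∈ segment ℝ x y, fderiv ℝ f p (y - x) = 0) : f x = f y := by
  have hderiv : ∀ t ∈ Icc (0 : ℝ) 1, HasDerivAt (f ∘ AffineMap.lineMap x y) 0 t := fun t ht => by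
    have hp : AffineMap.lineMap x y t ∈ segment ℝ x y :=
      segment_eq_image_lineMap ℝ x y ▸ mem_image_of_mem _ ht
    simpa [hf' _ hp] using (hf _ hp).hasFDerivAt.comp_hasDerivAt t AffineMap.hasDerivAt_lineMap
  have := constant_of_has_deriv_right_zero
    (fun t ht => (hderiv t ht).continuousAt.continuousWithinAt)
    (fun t ht => (hderiv t (Ico_subset_Icc_self ht)).hasDerivWithinAt) 1
    (right_mem_Icc.2 zero_le_one)
  simpa using this.symm

section WeakLineDeriv

open scoped Convolution

variable {E F : Type*} [NormedAddCommGroup E] [NormedSpace ℝ E] [MeasurableSpace E]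
  [NormedAddCommGroup F] [NormedSpace ℝ F]

/-- The distributional derivative of `f` in the direction `v` vanishes on `Ω`. Test functions are
supported in `Ω`, so the values of `f` outside `Ω` are irrelevant although the integral is taken
over the whole space. -/
def HasZeroWeakLineDerivOn (μ : Measure E) (f : E → F) (v : E) (Ω : Set E) : Prop :=
  ∀ φ : E → ℝ, ContDiff ℝ (⊤ : ℕ∞) φ → HasCompactSupport φ → tsupport φ ⊆ Ω →
    ∫ x, fderiv ℝ φ x v • f x ∂μ = 0

variable [BorelSpace E] [FiniteDimensional ℝ E] {μ : Measure E} [μ.IsAddHaarMeasure]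
  {f : E → F} {v x y : E} {Ω : Set E} {c d : F}

theorem HasZeroWeakLineDerivOn.hasFDerivAt_convolution (h : HasZeroWeakLineDerivOn μ f v Ω)
    (hf : LocallyIntegrable f μ) {ρ : E → ℝ} (hρ : ContDiff ℝ (⊤ : ℕ∞) ρ)
    (hρc : HasCompactSupport ρ) (hx : tsupport (fun t => ρ (x - t)) ⊆ Ω) :
    ∃ T : E →L[ℝ] F, HasFDerivAt (ρ ⋆[ContinuousLinearMap.lsmul ℝ ℝ, μ] f) T x ∧ T v = 0 := by
  have hd := hρc.hasFDerivAt_convolution_right (ContinuousLinearMap.lsmul ℝ ℝ).flip hf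
    (hρ.of_le (by simp)) x
  rw [convolution_flip] at hd
  refine ⟨_, hd, ?_⟩
  have hρx : ContDiff ℝ (⊤ : ℕ∞) fun t => ρ (x - t) := hρ.comp (contDiff_const.sub contDiff_id)
  have hφ : ∀ t, fderiv ℝ (fun t => ρ (x - t)) t v = -fderiv ℝ ρ (x - t) v := fun t => by
    have hd : HasFDerivAt (fun t => ρ (x - t)) _ t :=
      (hρ.differentiable (by simp) (x - t)).hasFDerivAt.comp t ((hasFDerivAt_id t).const_sub x)
    simp [hd.fderiv]
  have hzero := h _ hρx (hρc.comp_homeomorph (Homeomorph.subLeft x)) hx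
  rw [convolution_precompR_apply _ hf (hρc.fderiv ℝ) (hρ.continuous_fderiv (by simp))]
  simpa [convolution_def, hφ, integral_neg] using hzero

theorem HasZeroWeakLineDerivOn.convolution_eq (h : HasZeroWeakLineDerivOn μ f (y - x) Ω)
    (hf : LocallyIntegrable f μ) {ρ : E → ℝ} (hρ : ContDiff ℝ (⊤ : ℕ∞) ρ)
    (hρc : HasCompactSupport ρ) (hΩ : ∀ p ∈ segment ℝ x y, tsupport (fun t => ρ (p - t)) ⊆ Ω) :
    (ρ ⋆[ContinuousLinearMap.lsmul ℝ ℝ, μ] f) x = (ρ ⋆[ContinuousLinearMap.lsmul ℝ ℝ, μ] f) y := by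
  refine eq_of_fderiv_apply_sub_eq_zero_on_segment (fun p hp => ?_) fun p hp => ?_
  all_goals obtain ⟨T, hT, hT0⟩ := h.hasFDerivAt_convolution hf hρ hρc (hΩ p hp)
  · exact hT.differentiableAt
  · rwa [hT.fderiv]

theorem HasZeroWeakLineDerivOn.eq_of_eventually_eq [CompleteSpace F]
    (h : HasZeroWeakLineDerivOn μ f (y - x) Ω) (hf : LocallyIntegrable f μ) (hΩ : IsOpen Ω)
    (hxy : segment ℝ x y ⊆ Ω) (hx : ∀ᶠ z in 𝓝 x, f z = c) (hy : ∀ᶠ z in 𝓝 y, f z = d) :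
    c = d := by
  have hcompact : IsCompact (segment ℝ x y) :=
    convexHull_pair (𝕜 := ℝ) x y ▸ (toFinite {x, y}).isCompact_convexHull ℝ
  obtain ⟨r, hr, hrΩ⟩ := hcompact.exists_cthickening_subset_open hΩ hxy
  obtain ⟨rx, hrx, hx⟩ := Metric.eventually_nhds_iff_ball.1 hx
  obtain ⟨ry, hry, hy⟩ := Metric.eventually_nhds_iff_ball.1 hy
  have hs : 0 < min r (min rx ry) := by positivity
  let ρ : ContDiffBump (0 : E) := ⟨_, _, half_pos hs, half_lt_self hs⟩
  have hsupp : ∀ p ∈ segment ℝ x y, tsupport (fun t => ρ.normed μ (p - t)) ⊆ Ω := fun p hp => by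
    refine Subset.trans (closure_minimal (fun t ht => ?_) isClosed_closedBall)
      ((closedBall_subset_cthickening hp r).trans hrΩ)
    have : p - t ∈ ball 0 ρ.rOut := ρ.support_normed_eq (μ := μ) ▸ ht
    rw [mem_ball_zero_iff, ← dist_eq_norm'] at this
    exact this.le.trans (min_le_left _ _)
  have heval : ∀ {z : E} {s : ℝ} {b : F}, ρ.rOut ≤ s → (∀ w ∈ ball z s, f w = b) →
      (ρ.normed μ ⋆[ContinuousLinearMap.lsmul ℝ ℝ, μ] f) z = b := fun {z s b} hs hz => by
    have hz0 := hz z (mem_ball_self (ρ.rOut_pos.trans_le hs))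
    rw [ContDiffBump.normed_convolution_eq_right fun w hw => ?_, hz0]
    rw [hz w (ball_subset_ball hs hw), hz0]
  have := h.convolution_eq hf ρ.contDiff_normed ρ.hasCompactSupport_normed hsupp
  rwa [heval ((min_le_right _ _).trans (min_le_left _ _)) hx,
    heval ((min_le_right _ _).trans (min_le_right _ _)) hy] at this

end WeakLineDeriv

section CoplanarVectors

variable {K V : Type*} [Field K] [AddCommGroup V] [Module K V] {w p q v v' : V} {κ : K}

theorem exists_mem_span_singleton_add_smul (hwp : LinearIndependent K ![w, p])
    (hv : v ∈ Submodule.span K {w, p}) (hw : w ∈ Submodule.span K {v, p}) :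
    ∃ κ : K, v ∈ Submodule.span K {w + κ • p} := by
  obtain ⟨a, b, rfl⟩ := Submodule.mem_span_pair.1 hv
  obtain ⟨c, d, hcd⟩ := Submodule.mem_span_pair.1 hw
  have hca : c * a - 1 = 0 := (LinearIndependent.pair_iff.1 hwp (c * a - 1) (c * b + d) (by
    linear_combination (norm := module) hcd)).1
  refine ⟨c * b, Submodule.mem_span_singleton.2 ⟨a, ?_⟩⟩
  linear_combination (norm := module) b • hca • p

theorem mem_span_add_smul_of_coplanar (hwp : LinearIndependent K ![w, p])
    (hq : q ∉ Submodule.span K {w, p}) (hv : v ∈ Submodule.span K {w + κ • p})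
    (hv'w : v' ∈ Submodule.span K {w, q}) (hv'v : v' ∈ Submodule.span K {v, q - p}) :
    v' ∈ Submodule.span K {w + κ • q} := by
  obtain ⟨s, rfl⟩ := Submodule.mem_span_singleton.1 hv
  obtain ⟨a, b, rfl⟩ := Submodule.mem_span_pair.1 hv'w
  obtain ⟨c, d, hcd⟩ := Submodule.mem_span_pair.1 hv'v
  have hdb : d - b = 0 := by
    by_contra hne
    refine hq ((Submodule.smul_mem_iff _ hne).1 (Submodule.mem_span_pair.2
      ⟨a - c * s, d - c * s * κ, ?_⟩))
    linear_combination (norm := module) -hcd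
  obtain ⟨ha, hb⟩ := LinearIndependent.pair_iff.1 hwp (a - c * s) (d - c * s * κ) (by
    linear_combination (norm := module) hdb • q - hcd)
  refine Submodule.mem_span_singleton.2 ⟨c * s, ?_⟩
  linear_combination (norm := module) (hdb - hb) • q - ha • w

theorem span_pair_ne_top (hV : 3 ≤ Module.finrank K V) (a b : V) :
    Submodule.span K {a, b} ≠ ⊤ := by
  intro h
  have := finrank_range_le_card (R := K) ![a, b]
  rw [Matrix.range_cons_cons_empty, Set.finrank, h, finrank_top, Fintype.card_fin] at this
  lia

end CoplanarVectors

section CoplanarLines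

variable {K E : Type*} [NontriviallyNormedField K] [AddCommGroup E] [Module K E]
  {u : E → E} {Ω : Set E} {x : E}

variable (K) in
/-- Any two of the lines `y + K (u y)`, `y ∈ Ω`, lie in a common plane. Ranging over all ordered
pairs makes the condition symmetric. -/
def CoplanarLinesOn (u : E → E) (Ω : Set E) : Prop :=
  ∀ y ∈ Ω, ∀ z ∈ Ω, u z ∈ Submodule.span K {u y, z - y}

variable [TopologicalSpace E] [ContinuousAdd E] [ContinuousSMul K E]

theorem exists_mem_sub_notMem {P : Submodule K E} (hP : P ≠ ⊤) (hΩ : Ω ∈ 𝓝 x) :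
    ∃ y ∈ Ω, y - x ∉ P := by
  by_contra! h
  refine hP (P.eq_top_of_nonempty_interior' ⟨0, mem_interior_iff_mem_nhds.2 ?_⟩)
  have hadd : ContinuousAt (fun a => a + x) 0 := by fun_prop
  filter_upwards [hadd.preimage_mem_nhds (by simpa using hΩ)] with a ha
  simpa using h _ ha

/-- The base line `x + K (u x)` and a line through a point off it determine `κ`; a point outside
their plane then gets the same `κ`, which handles the points in that plane in turn. -/
theorem CoplanarLinesOn.exists_mem_span_add_smul (h : CoplanarLinesOn K u Ω)
    (hE : 3 ≤ Module.finrank K E) (hΩ : Ω ∈ 𝓝 x) (hux : u x ≠ 0) :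
    ∃ κ : K, ∀ z ∈ Ω, z - x ∉ Submodule.span K {u x} →
      u z ∈ Submodule.span K {u x + κ • (z - x)} := by
  have hx : x ∈ Ω := mem_of_mem_nhds hΩ
  have hindep : ∀ {p : E}, p ∉ Submodule.span K {u x} → LinearIndependent K ![u x, p] :=
    fun hp => (LinearIndependent.pair_iff' hux).2 fun a ha =>
      hp (Submodule.mem_span_singleton.2 ⟨a, ha⟩)
  have hle : ∀ p : E, Submodule.span K {u x} ≤ Submodule.span K {u x, p} := fun p =>
    Submodule.span_mono (by simp)
  have hspread : ∀ {κ : K} {y z : E}, y ∈ Ω → z ∈ Ω → y - x ∉ Submodule.span K {u x} →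
      z - x ∉ Submodule.span K {u x, y - x} → u y ∈ Submodule.span K {u x + κ • (y - x)} →
      u z ∈ Submodule.span K {u x + κ • (z - x)} := fun {κ y z} hy hz hyx hzx hκ =>
    mem_span_add_smul_of_coplanar (hindep hyx) hzx hκ (h x hx z hz)
      (by simpa only [sub_sub_sub_cancel_right] using h y hy z hz)
  obtain ⟨y₀, hy₀, hy₀x⟩ := exists_mem_sub_notMem
    (fun htop => span_pair_ne_top hE (u x) (u x) (by simpa using htop)) hΩ
  have hback : u x ∈ Submodule.span K {u y₀, y₀ - x} := by
    obtain ⟨a, b, hab⟩ := Submodule.mem_span_pair.1 (h y₀ hy₀ x hx)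
    exact Submodule.mem_span_pair.2 ⟨a, -b, by rw [← hab]; module⟩
  obtain ⟨κ, hκ⟩ := exists_mem_span_singleton_add_smul (hindep hy₀x) (h x hx y₀ hy₀) hback
  refine ⟨κ, fun z hz hzx => ?_⟩
  by_cases hzy₀ : z - x ∈ Submodule.span K {u x, y₀ - x}
  · obtain ⟨y₁, hy₁, hy₁x⟩ := exists_mem_sub_notMem (span_pair_ne_top hE (u x) (y₀ - x)) hΩ
    refine hspread hy₁ hz (fun hmem => hy₁x (hle _ hmem)) (fun hzy₁ => hy₁x ?_)
      (hspread hy₀ hy₁ hy₀x hy₁x hκ)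
    rw [pair_comm] at hzy₁
    refine Submodule.span_le.2 ?_ (mem_span_insert_exchange hzy₁ hzx)
    rintro _ (rfl | rfl)
    exacts [hzy₀, Submodule.subset_span (by simp)]
  · exact hspread hy₀ hz hy₀x hzy₀ hκ

theorem CoplanarLinesOn.exists_add_smul_mem_span (h : CoplanarLinesOn K u Ω)
    (hE : 3 ≤ Module.finrank K E) (hΩ : Ω ∈ 𝓝 x) (hu : ∀ z ∈ Ω, u z ≠ 0) :
    ∃ κ : K, ∀ z ∈ Ω, u x + κ • (z - x) ∈ Submodule.span K {u z} := by
  have hswap : ∀ {a b : E}, a ≠ 0 → a ∈ Submodule.span K {b} → b ∈ Submodule.span K {a} :=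
    fun ha hab => by
      obtain ⟨s, rfl⟩ := Submodule.mem_span_singleton.1 hab
      exact Submodule.mem_span_singleton.2 ⟨s⁻¹, inv_smul_smul₀ (smul_ne_zero_iff.1 ha).1 _⟩
  have hx : x ∈ Ω := mem_of_mem_nhds hΩ
  obtain ⟨κ, hκ⟩ := h.exists_mem_span_add_smul hE hΩ (hu x hx)
  refine ⟨κ, fun z hz => ?_⟩
  by_cases hzx : z - x ∈ Submodule.span K {u x}
  · have huz : u z ∈ Submodule.span K {u x} := by
      refine Submodule.span_le.2 ?_ (h x hx z hz)
      rintro _ (rfl | rfl)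
      exacts [Submodule.mem_span_singleton_self _, hzx]
    have hux := hswap (hu z hz) huz
    have hle : Submodule.span K {u x} ≤ Submodule.span K {u z} := by
      simpa [Submodule.span_singleton_le_iff_mem] using hux
    exact add_mem hux (Submodule.smul_mem _ _ (hle hzx))
  · exact hswap (hu z hz) (hκ z hz hzx)

end CoplanarLines

theorem eventually_eq_of_ker_fderiv_le {E F G : Type*} [NormedAddCommGroup E] [NormedSpace ℝ E]
    [CompleteSpace E] [NormedAddCommGroup F] [NormedSpace ℝ F] [FiniteDimensional ℝ F]
    [NormedAddCommGroup G] [NormedSpace ℝ G] {f : E → F} {g : E → G} {x : E}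
    (hf : ContDiffAt ℝ 1 f x) (hsurj : (fderiv ℝ f x).range = ⊤)
    (hg : ∀ᶠ y in 𝓝 x, DifferentiableAt ℝ g y)
    (hfg : ∀ᶠ y in 𝓝 x, (fderiv ℝ f y).ker ≤ (fderiv ℝ g y).ker) :
    ∀ᶠ y in 𝓝 x, f y = f x → g y = g x := by
  have := FiniteDimensional.complete ℝ F
  let φ := HasStrictFDerivAt.implicitFunctionDataOfComplemented f _
    (hf.hasStrictFDerivAt one_ne_zero) hsurj
    (fderiv ℝ f x).ker_closedComplemented_of_finiteDimensional_range
  let s := φ.implicitFunction (f x)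
  have hright : ContDiffAt ℝ 1 φ.rightFun x :=
    (ContinuousLinearMap.contDiff _).contDiffAt.comp x (contDiffAt_id.sub contDiffAt_const)
  have hs : ContDiffAt ℝ 1 s (φ.rightFun x) :=
    ContDiffAt.comp (φ.rightFun x) (f := fun k => (f x, k))
      (ImplicitFunctionData.contDiffAt_implicitFunction hf hright one_ne_zero)
      (contDiffAt_const.prodMk contDiffAt_id)
  have hsx : s (φ.rightFun x) = x := φ.implicitFunction_apply_image.self_of_nhds
  have hfs : ∀ᶠ k in 𝓝 (φ.rightFun x), f (s k) = f x :=
    φ.leftFun_implicitFunction.curry_nhds.self_of_nhds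
  have hs_tendsto : Tendsto s (𝓝 (φ.rightFun x)) (𝓝 x) := by
    simpa only [ContinuousAt, hsx] using hs.continuousAt
  have hderiv : ∀ᶠ k in 𝓝 (φ.rightFun x), HasFDerivAt (g ∘ s) (0 : _ →L[ℝ] G) k := by
    filter_upwards [hfs.eventually_nhds, hs.eventually (by simp),
      hs_tendsto.eventually (hf.eventually (by simp)), hs_tendsto.eventually hg,
      hs_tendsto.eventually hfg] with k hfk hsk hfsk hgk hker
    have hsk := (hsk.differentiableAt one_ne_zero).hasFDerivAt
    have hzero := ((hfsk.differentiableAt one_ne_zero).hasFDerivAt.comp k hsk).unique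
      ((hasFDerivAt_const (f x) k).congr_of_eventuallyEq hfk)
    refine (hgk.hasFDerivAt.comp k hsk).congr_fderiv (ContinuousLinearMap.ext fun a => ?_)
    exact hker (DFunLike.congr_fun hzero a)
  obtain ⟨r, hr, hball⟩ := Metric.eventually_nhds_iff_ball.1 hderiv
  filter_upwards [φ.implicitFunction_apply_image,
    hright.continuousAt.preimage_mem_nhds (ball_mem_nhds _ hr)] with y hy hyr hfy
  have hconst := isOpen_ball.is_const_of_fderiv_eq_zero isPreconnected_ball
    (fun k hk => (hball k hk).differentiableAt.differentiableWithinAt)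
    (fun k hk => (hball k hk).fderiv) hyr (mem_ball_self hr)
  have hsy : s (φ.rightFun y) = y := (congrArg (φ.implicitFunction · _) hfy.symm).trans hy
  simpa [hsx, hsy] using hconst

section Quadric

variable {E : Type*} [NormedAddCommGroup E] [InnerProductSpace ℝ E]

theorem hasFDerivAt_inner_sub_add_norm_sub_sq (w x y : E) (κ : ℝ) :
    HasFDerivAt (fun z => 2 * ⟪w, z - x⟫ + κ * ‖z - x‖ ^ 2)
      ((2 : ℝ) • innerSL ℝ (w + κ • (y - x))) y := by
  have hsub : HasFDerivAt (fun z => z - x) (ContinuousLinearMap.id ℝ E) y :=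
    (hasFDerivAt_id y).sub_const x
  refine ((((innerSL ℝ w).hasFDerivAt.comp y hsub).const_mul 2).add
    (hsub.norm_sq.const_mul κ)).congr_fderiv ?_
  ext a
  simp only [ContinuousLinearMap.comp_id, add_apply, smul_apply, coe_innerSL_apply, smul_eq_mul,
    nsmul_eq_mul, Nat.cast_ofNat, inner_add_left, real_inner_smul_left]
  ring

theorem quadric_subset_sphere_or_hyperplane {w : E} (hw : w ≠ 0) (x : E) (κ : ℝ) :
    (∃ c : E, ∃ R : ℝ, 0 < R ∧ {z | 2 * ⟪w, z - x⟫ + κ * ‖z - x‖ ^ 2 = 0} ⊆ sphere c R) ∨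
    ∃ ν : E, ‖ν‖ = 1 ∧
      ∃ c : ℝ, {z | 2 * ⟪w, z - x⟫ + κ * ‖z - x‖ ^ 2 = 0} ⊆ {z | ⟪z, ν⟫ = c} := by
  obtain rfl | hκ := eq_or_ne κ 0
  · refine Or.inr ⟨‖w‖⁻¹ • w, norm_smul_inv_norm hw, ⟪x, ‖w‖⁻¹ • w⟫, fun z hz => ?_⟩
    have hzx : ⟪w, z - x⟫ = 0 := by simpa using hz
    rw [mem_ofPred_eq, ← sub_eq_zero, ← inner_sub_left, inner_smul_right, real_inner_comm, hzx,
      mul_zero]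
  · refine Or.inl ⟨x - κ⁻¹ • w, ‖κ⁻¹ • w‖, by simp [hκ, hw], fun z hz => ?_⟩
    rw [mem_sphere, dist_eq_norm, ← sq_eq_sq₀ (norm_nonneg _) (norm_nonneg _), ← sub_add,
      norm_add_sq_real, inner_smul_right, real_inner_comm]
    rw [mem_ofPred_eq] at hz
    field_simp
    linear_combination hz

/-- The hypothesis says that `∇ψ` is parallel to the gradient of the quadratic polynomial, hence the
latter is constant on level sets of `ψ`. -/
theorem eventually_mem_quadric_of_parallel_gradient [CompleteSpace E] {ψ : E → ℝ} {x : E}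
    {κ : ℝ} (hψ : ContDiffAt ℝ 1 ψ x) (hψx : gradient ψ x ≠ 0)
    (h : ∀ᶠ z in 𝓝 x, gradient ψ x + κ • (z - x) ∈ Submodule.span ℝ {gradient ψ z}) :
    ∀ᶠ z in 𝓝 x, ψ z = ψ x → 2 * ⟪gradient ψ x, z - x⟫ + κ * ‖z - x‖ ^ 2 = 0 := by
  have hderiv := hasFDerivAt_inner_sub_add_norm_sub_sq (gradient ψ x) x (κ := κ)
  have hsurj : (fderiv ℝ ψ x).range = ⊤ :=
    LinearMap.range_eq_top.2 <| LinearMap.surjective fun h0 => hψx <| by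
      have hzero : fderiv ℝ ψ x = 0 := ContinuousLinearMap.coe_injective h0
      rw [gradient, hzero, map_zero]
  have hker : ∀ᶠ z in 𝓝 x, (fderiv ℝ ψ z).ker ≤
      (fderiv ℝ (fun z => 2 * ⟪gradient ψ x, z - x⟫ + κ * ‖z - x‖ ^ 2) z).ker := by
    filter_upwards [h] with z hz a ha
    obtain ⟨s, hs⟩ := Submodule.mem_span_singleton.1 hz
    have ha : ⟪gradient ψ z, a⟫ = 0 := inner_gradient_left.trans ha
    rw [(hderiv z).fderiv, ← hs]
    simp [ha]
  simpa only [sub_self, inner_zero_right, norm_zero, mul_zero, zero_pow two_ne_zero, add_zero]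
    using eventually_eq_of_ker_fderiv_le hψ hsurj
      (Eventually.of_forall fun z => (hderiv z).differentiableAt) hker

end Quadric

theorem inner_add_smul_sub_smul_eq_zero {E : Type*} [NormedAddCommGroup E] [InnerProductSpace ℝ E]
    {d w ξ : E} (hξ : ξ ≠ 0) (hd : ⟪d, ξ⟫ = 0) (hw : ⟪w, ξ⟫ = 0) (t : ℝ) :
    ⟪d + (t * (⟪d, w⟫ / ⟪ξ, ξ⟫)) • ξ, ξ - t • w⟫ = 0 := by
  have hξξ : ⟪ξ, ξ⟫ ≠ 0 := inner_self_ne_zero.2 hξ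
  have hw' : ⟪ξ, w⟫ = 0 := by rw [real_inner_comm, hw]
  simp only [inner_add_left, inner_sub_right, real_inner_smul_left, real_inner_smul_right, hd, hw']
  field_simp
  ring

section Kinetic

variable {N : ℕ} {Ω Ω' : Set (EuclideanSpace ℝ (Fin N))}
  {u : EuclideanSpace ℝ (Fin N) → EuclideanSpace ℝ (Fin N)} {x y v ξ : EuclideanSpace ℝ (Fin N)}

theorem KineticFormulation.mono (h : KineticFormulation Ω u) (hsub : Ω' ⊆ Ω) :
    KineticFormulation Ω' u := by
  intro ξ hξ v hv φ hφ hφc hφΩ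
  have hzero : ∀ x ∉ Ω', chi u x ξ * ⟪v, gradient φ x⟫ = 0 := fun x hx => by
    simp [inner_gradient_right, fderiv_of_notMem_tsupport (𝕜 := ℝ) fun h => hx (hφΩ h)]
  rw [setIntegral_eq_integral_of_forall_compl_eq_zero hzero,
    ← h ξ hξ v hv φ hφ hφc (hφΩ.trans hsub),
    setIntegral_eq_integral_of_forall_compl_eq_zero fun x hx => hzero x fun h => hx (hsub h)]

theorem chi_smul_of_pos {r : ℝ} (hr : 0 < r) : chi u x (r • ξ) = chi u x ξ := by
  simp [chi, inner_smul_right, hr]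

theorem KineticFormulation.hasZeroWeakLineDerivOn (h : KineticFormulation Ω u) (hΩ : IsOpen Ω)
    (hξ : ξ ≠ 0) (hv : ⟪v, ξ⟫ = 0) :
    HasZeroWeakLineDerivOn volume (Ω.indicator fun x => chi u x ξ) v Ω := by
  intro φ hφ hφc hφΩ
  have := h (‖ξ‖⁻¹ • ξ) (norm_smul_inv_norm hξ) v (by simp [inner_smul_right, hv]) φ hφ hφc hφΩ
  simp_rw [chi_smul_of_pos (inv_pos.2 (norm_pos_iff.2 hξ)), inner_gradient_right] at this
  rw [← this, ← integral_indicator hΩ.measurableSet]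
  congr with x
  by_cases hx : x ∈ Ω <;> simp [hx, mul_comm]

theorem locallyIntegrable_indicator_chi (hΩ : IsOpen Ω) (hu : ContinuousOn u Ω) :
    LocallyIntegrable (Ω.indicator fun x => chi u x ξ) := by
  have hpos : IsOpen (Ω ∩ {x | 0 < ⟪u x, ξ⟫}) :=
    (hu.inner continuousOn_const).isOpen_inter_preimage hΩ isOpen_Ioi
  have := (locallyIntegrable_const (1 : ℝ) (μ := volume)).indicator hpos.measurableSet
  rwa [← indicator_indicator] at this

theorem KineticFormulation.inner_nonneg (h : KineticFormulation Ω u) (hΩ : IsOpen Ω)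
    (hu : ContinuousOn u Ω) (hxy : segment ℝ x y ⊆ Ω) (hξ : ⟪y - x, ξ⟫ = 0)
    (hpos : 0 < ⟪u x, ξ⟫) : 0 ≤ ⟪u y, ξ⟫ := by
  by_contra! hneg
  have hξ0 : ξ ≠ 0 := by
    rintro rfl
    simp at hpos
  have hcont : ∀ z ∈ segment ℝ x y, ContinuousAt (fun w => ⟪u w, ξ⟫) z := fun z hz =>
    (hu.continuousAt (hΩ.mem_nhds (hxy hz))).inner continuousAt_const
  have hx := left_mem_segment ℝ x y
  have hy := right_mem_segment ℝ x y
  refine zero_ne_one' ℝ (((h.hasZeroWeakLineDerivOn hΩ hξ0 hξ).eq_of_eventually_eq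
    (locallyIntegrable_indicator_chi hΩ hu) hΩ hxy (c := 1) (d := 0) ?_ ?_).symm)
  · filter_upwards [hΩ.mem_nhds (hxy hx), (hcont x hx).eventually_const_lt hpos] with z hz hzpos
    simp [hz, chi, hzpos]
  · filter_upwards [(hcont y hy).eventually_lt_const hneg] with z hzneg
    simp [chi, hzneg.le]

theorem KineticFormulation.inner_nonpos (h : KineticFormulation Ω u) (hΩ : IsOpen Ω)
    (hΩc : Convex ℝ Ω) (hu : ContinuousOn u Ω) (hx : x ∈ Ω) (hy : y ∈ Ω) (hux : u x ≠ 0)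
    (hξu : ⟪u x, ξ⟫ = 0) (hξ : ⟪y - x, ξ⟫ = 0) : ⟪u y, ξ⟫ ≤ 0 := by
  by_contra! hpos
  have hξ0 : ξ ≠ 0 := by
    rintro rfl
    simp at hpos
  -- Tilting `ξ` by `-t • u x` makes `⟪u x, ξ⟫` negative; `y` is moved to stay in the hyperplane.
  set ξt : ℝ → EuclideanSpace ℝ (Fin N) := fun t => ξ - t • u x
  set yt : ℝ → EuclideanSpace ℝ (Fin N) := fun t => y + (t * (⟪y - x, u x⟫ / ⟪ξ, ξ⟫)) • ξ
  have hξt : Continuous ξt := by fun_prop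
  have hyt : Continuous yt := by fun_prop
  have hξt0 : ξt 0 = ξ := by simp [ξt]
  have hyt0 : yt 0 = y := by simp [yt]
  have hlim : ContinuousAt (fun t => ⟪u (yt t), ξt t⟫) 0 := by
    refine ContinuousAt.inner (ContinuousAt.comp ?_ hyt.continuousAt) hξt.continuousAt
    exact hu.continuousAt (hyt0 ▸ hΩ.mem_nhds hy)
  have hnear : ∀ᶠ t in 𝓝[>] (0 : ℝ), yt t ∈ Ω ∧ 0 < ⟪u (yt t), ξt t⟫ :=
    nhdsWithin_le_nhds ((hyt.continuousAt.eventually_mem (hyt0.symm ▸ hΩ.mem_nhds hy)).and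
      (hlim.eventually_const_lt (by simpa [hξt0, hyt0] using hpos)))
  obtain ⟨t, ⟨hytΩ, hytpos⟩, ht⟩ := (hnear.and self_mem_nhdsWithin).exists
  have horth : ⟪x - yt t, ξt t⟫ = 0 := by
    rw [← neg_sub, inner_neg_left, neg_eq_zero]
    simpa only [ξt, yt, add_sub_right_comm] using inner_add_smul_sub_smul_eq_zero hξ0 hξ hξu t
  have hnonneg := h.inner_nonneg hΩ hu (hΩc.segment_subset hytΩ hx) horth hytpos
  have hneg : ⟪u x, ξt t⟫ = -(t * ⟪u x, u x⟫) := by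
    simp [ξt, inner_sub_right, inner_smul_right, hξu]
  linarith [mul_pos ht (real_inner_self_pos.2 hux)]

theorem KineticFormulation.coplanarLinesOn (h : KineticFormulation Ω u) (hΩ : IsOpen Ω)
    (hΩc : Convex ℝ Ω) (hu : ContinuousOn u Ω) (hu0 : ∀ y ∈ Ω, u y ≠ 0) :
    CoplanarLinesOn ℝ u Ω := by
  intro y hy z hz
  have hle : ∀ {ξ}, ⟪u y, ξ⟫ = 0 → ⟪z - y, ξ⟫ = 0 → ⟪u z, ξ⟫ ≤ 0 :=
    h.inner_nonpos hΩ hΩc hu hy hz (hu0 y hy)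
  rw [← Submodule.orthogonal_orthogonal (Submodule.span ℝ _), Submodule.mem_orthogonal']
  intro ξ hξ
  have hξy : ⟪u y, ξ⟫ = 0 := hξ _ (Submodule.subset_span (by simp))
  have hξz : ⟪z - y, ξ⟫ = 0 := hξ _ (Submodule.subset_span (by simp))
  have hge : ⟪u z, -ξ⟫ ≤ 0 := hle (by simpa using hξy) (by simpa using hξz)
  exact le_antisymm (hle hξy hξz) (by simpa using hge)

end Kinetic

theorem level_sets_umbilical_general (N : ℕ) (hN : 3 ≤ N)
    (Ω : Set (EuclideanSpace ℝ (Fin N))) (hΩ : IsOpen Ω)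
    (ψ : EuclideanSpace ℝ (Fin N) → ℝ) (hψ : ContDiffOn ℝ 1 ψ Ω)
    (hkin : KineticFormulation Ω (fun x => gradient ψ x))
    (α : ℝ) (S : Set (EuclideanSpace ℝ (Fin N))) (hS : S ⊆ {x ∈ Ω | ψ x = α})
    (x : EuclideanSpace ℝ (Fin N)) (hx : x ∈ S) (hψx : gradient ψ x ≠ 0) :
    ∃ U : Set (EuclideanSpace ℝ (Fin N)), IsOpen U ∧ x ∈ U ∧
      ((∃ c : EuclideanSpace ℝ (Fin N), ∃ R : ℝ, 0 < R ∧ S ∩ U ⊆ Metric.sphere c R) ∨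
       (∃ ν : EuclideanSpace ℝ (Fin N), ‖ν‖ = 1 ∧ ∃ c : ℝ, S ∩ U ⊆ {y | ⟪y, ν⟫ = c})) := by
  obtain ⟨hxΩ, hxα⟩ := hS hx
  have hu : ContinuousOn (gradient ψ) Ω :=
    (InnerProductSpace.toDual ℝ _).symm.continuous.comp_continuousOn
      (hψ.continuousOn_fderiv_of_isOpen hΩ le_rfl)
  obtain ⟨r, hr, hball⟩ := Metric.eventually_nhds_iff_ball.1 ((hΩ.eventually_mem hxΩ).and
    ((hu.continuousAt (hΩ.mem_nhds hxΩ)).eventually_ne hψx))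
  have hsub : ball x r ⊆ Ω := fun z hz => (hball z hz).1
  have hu0 : ∀ z ∈ ball x r, gradient ψ z ≠ 0 := fun z hz => (hball z hz).2
  have hlines : CoplanarLinesOn ℝ (gradient ψ) (ball x r) :=
    (hkin.mono hsub).coplanarLinesOn isOpen_ball (convex_ball x r) (hu.mono hsub) hu0
  obtain ⟨κ, hκ⟩ := hlines.exists_add_smul_mem_span (by simpa using hN) (ball_mem_nhds x hr) hu0
  obtain ⟨U, hUQ, hU, hxU⟩ := _root_.eventually_nhds_iff.1
    (eventually_mem_quadric_of_parallel_gradient (hψ.contDiffAt (hΩ.mem_nhds hxΩ)) hψx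
      (Metric.eventually_nhds_iff_ball.2 ⟨r, hr, hκ⟩))
  have hSU : S ∩ U ⊆ {z | 2 * ⟪gradient ψ x, z - x⟫ + κ * ‖z - x‖ ^ 2 = 0} := fun z hz =>
    hUQ z hz.2 ((hS hz.1).2.trans hxα.symm)
  exact ⟨U, hU, hxU, (quadric_subset_sphere_or_hyperplane hψx x κ).imp
    (fun ⟨c, R, hR, h⟩ => ⟨c, R, hR, hSU.trans h⟩) fun ⟨ν, hν, c, h⟩ => ⟨ν, hν, c, hSU.trans h⟩⟩

theorem level_sets_umbilical (N : ℕ) (hN : 3 ≤ N)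
    (Ω : Set (EuclideanSpace ℝ (Fin N))) (hΩ : IsOpen Ω)
    (ψ : EuclideanSpace ℝ (Fin N) → ℝ) (hψ : ContDiffOn ℝ (⊤ : ℕ∞) ψ Ω)
    (hkin : KineticFormulation Ω (fun x => gradient ψ x))
    (α : ℝ) (hnv : ∀ x ∈ Ω, ψ x = α → gradient ψ x ≠ 0)
    (S : Set (EuclideanSpace ℝ (Fin N))) (x₀ : EuclideanSpace ℝ (Fin N))
    (hx₀ : x₀ ∈ {x ∈ Ω | ψ x = α})
    (hS : S = connectedComponentIn {x ∈ Ω | ψ x = α} x₀) :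
    ∀ x ∈ S, ∃ U : Set (EuclideanSpace ℝ (Fin N)), IsOpen U ∧ x ∈ U ∧
      ((∃ c : EuclideanSpace ℝ (Fin N), ∃ R : ℝ, 0 < R ∧ S ∩ U ⊆ Metric.sphere c R) ∨
       (∃ ν : EuclideanSpace ℝ (Fin N), ‖ν‖ = 1 ∧ ∃ c : ℝ, S ∩ U ⊆ {y | ⟪y, ν⟫ = c})) := by
  intro x hx
  have hsub := hS ▸ connectedComponentIn_subset {x ∈ Ω | ψ x = α} x₀
  exact level_sets_umbilical_general N hN Ω hΩ ψ (hψ.of_le (by simp)) hkin α S hsub x hx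
    (hnv x (hsub hx).1 (hsub hx).2)
end
end

section
/- Let N ≥ 2, Ω ⊆ ℝ^N an open set, and ψ : Ω → ℝ a smooth function such that the gradient field u = ∇ψ satisfies the kinetic formulation. Assume that for some α ∈ ℝ, |∇ψ(x)| ≠ 0 for every x in the level set {x ∈ Ω : ψ(x) = α}, and let S be a connected component of this level set. Then |∇ψ| is constant on S: there exists c > 0 with |∇ψ(x)| = c for all x ∈ S. -/
open MeasureTheory Metric Set Filter
open scoped RealInnerProductSpace ENNReal Topology

noncomputable section

/-!
Mollification shows that, for `v ⊥ ξ`, the function `1_{∇ψ·ξ > 0}` takes the same value at the two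
ends of any segment of `Ω` in the direction `v` at which it is continuous. Hence `∇ψ·ξ` cannot
change sign along `v` where it vanishes, i.e. `D²ψ(v, ξ) = 0` whenever `v·ξ = ∇ψ·ξ = 0`. For
`v = ∇ψ`, the symmetry of the Hessian turns this into `d(|∇ψ|²)(ξ) = 2 D²ψ(ξ, ∇ψ) = 0` for all
`ξ ∈ ker dψ`, so by the implicit function theorem `|∇ψ|` is locally constant on a regular level
set of `ψ`.
-/

section Calculus

variable {E F G : Type*} [NormedAddCommGroup E] [NormedSpace ℝ E]
  [NormedAddCommGroup F] [NormedSpace ℝ F] [NormedAddCommGroup G] [NormedSpace ℝ G]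

theorem eq_of_forall_mem_segment_fderiv_sub_eq_zero {f : E → F} {a b : E}
    (hf : ∀ z ∈ segment ℝ a b, DifferentiableAt ℝ f z)
    (hf' : ∀ z ∈ segment ℝ a b, fderiv ℝ f z (b - a) = 0) : f b = f a := by
  have hderiv : ∀ s ∈ Icc (0 : ℝ) 1, HasDerivAt (f ∘ AffineMap.lineMap a b) 0 s := by
    intro s hs
    have hz : AffineMap.lineMap a b s ∈ segment ℝ a b :=
      segment_eq_image_lineMap ℝ a b ▸ mem_image_of_mem _ hs
    exact hf' _ hz ▸ (hf _ hz).hasFDerivAt.comp_hasDerivAt s AffineMap.hasDerivAt_lineMap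
  simpa using constant_of_has_deriv_right_zero
    (fun s hs ↦ (hderiv s hs).continuousAt.continuousWithinAt)
    (fun s hs ↦ (hderiv s (Ico_subset_Icc_self hs)).hasDerivWithinAt)
    1 (right_mem_Icc.2 zero_le_one)

theorem eventually_eq_of_eventually_fderiv_eq_zero {f : E → F} {p : E}
    (hf : ∀ᶠ x in 𝓝 p, DifferentiableAt ℝ f x) (hf' : ∀ᶠ x in 𝓝 p, fderiv ℝ f x = 0) :
    ∀ᶠ x in 𝓝 p, f x = f p := by
  obtain ⟨ε, hε, hball⟩ := Metric.eventually_nhds_iff_ball.1 (hf.and hf')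
  filter_upwards [ball_mem_nhds p hε] with x hx
  exact isOpen_ball.is_const_of_fderiv_eq_zero (𝕜 := ℝ) (convex_ball p ε).isPreconnected
    (fun y hy ↦ (hball y hy).1.differentiableWithinAt) (fun y hy ↦ (hball y hy).2)
    hx (mem_ball_self hε)

theorem eventually_mul_neg_of_hasDerivAt {f : ℝ → ℝ} {f' : ℝ} (hf : HasDerivAt f f' 0)
    (hf0 : f 0 = 0) (hf' : f' ≠ 0) : ∀ᶠ t in 𝓝[>] 0, f t * f (-t) < 0 := by
  have hslope : Tendsto (fun t ↦ t⁻¹ * f t) (𝓝[≠] 0) (𝓝 f') := by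
    simpa [hf0] using hasDerivAt_iff_tendsto_slope_zero.1 hf
  have hneg : Tendsto (fun t : ℝ ↦ -t) (𝓝[>] 0) (𝓝[≠] 0) := by
    refine tendsto_nhdsWithin_iff.2 ⟨?_, ?_⟩
    · simpa using (continuous_neg.tendsto (0 : ℝ)).mono_left nhdsWithin_le_nhds
    · filter_upwards [self_mem_nhdsWithin] with t ht using neg_ne_zero.2 (ne_of_gt ht)
  have hprod := (hslope.mono_left (nhdsGT_le_nhdsNE 0)).mul (hslope.comp hneg)
  filter_upwards [hprod.eventually_const_lt (mul_self_pos.2 hf'), self_mem_nhdsWithin] with t ht ht0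
  have hrw : t⁻¹ * f t * ((-t)⁻¹ * f (-t)) = -(f t * f (-t)) * (t⁻¹ * t⁻¹) := by
    rw [inv_neg]; ring
  have ht2 : 0 < t⁻¹ * t⁻¹ := mul_self_pos.2 (inv_ne_zero (ne_of_gt ht0))
  simp only [Function.comp_apply, hrw] at ht
  linarith [pos_of_mul_pos_left ht ht2.le]

theorem fderiv_comp_eq_zero_of_ker_fderiv_le {H : Type*} [NormedAddCommGroup H] [NormedSpace ℝ H]
    {f : E → F} {g : E → G} {Φ : H → E} {k : H} (hf : DifferentiableAt ℝ f (Φ k))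
    (hg : DifferentiableAt ℝ g (Φ k)) (hΦ : DifferentiableAt ℝ Φ k)
    (hker : (fderiv ℝ f (Φ k)).ker ≤ (fderiv ℝ g (Φ k)).ker) (hfΦ : fderiv ℝ (f ∘ Φ) k = 0) :
    fderiv ℝ (g ∘ Φ) k = 0 := by
  ext w
  rw [fderiv_comp k hg hΦ]
  exact hker (by simpa [fderiv_comp k hf hΦ] using DFunLike.congr_fun hfΦ w)

theorem eventually_eq_on_fiber_leftFun_of_ker_fderiv_le {H : Type*} [NormedAddCommGroup H]
    [NormedSpace ℝ H] [CompleteSpace E] [CompleteSpace F] [CompleteSpace H]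
    (φ : ImplicitFunctionData ℝ E F H) (hl : ContDiffAt ℝ 1 φ.leftFun φ.pt)
    (hr : ContDiffAt ℝ 1 φ.rightFun φ.pt) {g : E → G}
    (hg : ∀ᶠ x in 𝓝 φ.pt, DifferentiableAt ℝ g x)
    (hker : ∀ᶠ x in 𝓝 φ.pt, (fderiv ℝ φ.leftFun x).ker ≤ (fderiv ℝ g x).ker) :
    ∀ᶠ x in 𝓝[φ.leftFun ⁻¹' {φ.leftFun φ.pt}] φ.pt, g x = g φ.pt := by
  set k₀ := φ.rightFun φ.pt
  set Φ := φ.implicitFunction (φ.leftFun φ.pt)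
  have hΦk₀ : Φ k₀ = φ.pt := φ.implicitFunction_apply_image.self_of_nhds
  have hslice : ContDiffAt ℝ 1 (fun k ↦ (φ.leftFun φ.pt, k)) k₀ := by fun_prop
  have hΦ : ContDiffAt ℝ 1 Φ k₀ :=
    (ImplicitFunctionData.contDiffAt_implicitFunction hl hr one_ne_zero).comp k₀ hslice
  have hΦtendsto : Tendsto Φ (𝓝 k₀) (𝓝 φ.pt) := hΦk₀ ▸ hΦ.continuousAt.tendsto
  have hΦdiff : ∀ᶠ k in 𝓝 k₀, DifferentiableAt ℝ Φ k :=
    (hΦ.eventually (by simp)).mono fun _ h ↦ h.differentiableAt one_ne_zero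
  have hldiff : ∀ᶠ x in 𝓝 φ.pt, DifferentiableAt ℝ φ.leftFun x :=
    (hl.eventually (by simp)).mono fun _ h ↦ h.differentiableAt one_ne_zero
  have hlevel : φ.leftFun ∘ Φ =ᶠ[𝓝 k₀] fun _ ↦ φ.leftFun φ.pt :=
    hslice.continuousAt.eventually φ.leftFun_implicitFunction
  have hconst : ∀ᶠ k in 𝓝 k₀, (g ∘ Φ) k = (g ∘ Φ) k₀ := by
    refine eventually_eq_of_eventually_fderiv_eq_zero ?_ ?_
    · filter_upwards [hΦdiff, hΦtendsto.eventually hg] with k hΦk hgk using hgk.comp k hΦk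
    · filter_upwards [hΦdiff, hΦtendsto.eventually (hldiff.and (hg.and hker)),
        hlevel.eventuallyEq_nhds] with k hΦk ⟨hlk, hgk, hkerk⟩ hlevelk
      exact fderiv_comp_eq_zero_of_ker_fderiv_le hlk hgk hΦk hkerk (by simp [hlevelk.fderiv_eq])
  have hmap := φ.map_implicitFunction_nhdsWithin_preimage univ
  rw [preimage_univ, nhdsWithin_univ, univ_inter] at hmap
  rw [← hmap, eventually_map]
  simpa only [Function.comp_apply, hΦk₀] using hconst

theorem eventually_eq_on_fiber_of_ker_fderiv_le [CompleteSpace E] [FiniteDimensional ℝ F]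
    {f : E → F} {g : E → G} {p : E} (hf : ContDiffAt ℝ 1 f p)
    (hsurj : (fderiv ℝ f p).range = ⊤) (hg : ∀ᶠ x in 𝓝 p, DifferentiableAt ℝ g x)
    (hker : ∀ᶠ x in 𝓝 p, (fderiv ℝ f x).ker ≤ (fderiv ℝ g x).ker) :
    ∀ᶠ x in 𝓝[f ⁻¹' {f p}] p, g x = g p := by
  have := FiniteDimensional.complete ℝ F
  let φ := HasStrictFDerivAt.implicitFunctionDataOfComplemented f _
    (hf.hasStrictFDerivAt one_ne_zero) hsurj
    (fderiv ℝ f p).ker_closedComplemented_of_finiteDimensional_range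
  refine eventually_eq_on_fiber_leftFun_of_ker_fderiv_le φ hf ?_ hg hker
  exact φ.rightDeriv.contDiff.contDiffAt.comp p (contDiffAt_id.sub contDiffAt_const)

end Calculus

section Gradient

variable {E : Type*} [NormedAddCommGroup E] [InnerProductSpace ℝ E] [CompleteSpace E]

theorem range_fderiv_eq_top_of_gradient_ne_zero {ψ : E → ℝ} {x : E} (h : gradient ψ x ≠ 0) :
    (fderiv ℝ ψ x).range = ⊤ := by
  have hfderiv : fderiv ℝ ψ x ≠ 0 := fun h0 ↦ h (by simp [gradient, h0])
  exact LinearMap.range_eq_top.2 (LinearMap.surjective (mod_cast hfderiv))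

theorem contDiffAt_gradient {ψ : E → ℝ} {x : E} {n m : WithTop ℕ∞} (hψ : ContDiffAt ℝ n ψ x)
    (hmn : m + 1 ≤ n) : ContDiffAt ℝ m (gradient ψ) x :=
  (InnerProductSpace.toDual ℝ E).symm.contDiff.contDiffAt.comp x (hψ.fderiv_right hmn)

theorem inner_fderiv_gradient_comm {ψ : E → ℝ} {x : E} (hψ : ContDiffAt ℝ 2 ψ x) (v w : E) :
    ⟪fderiv ℝ (gradient ψ) x v, w⟫ = ⟪fderiv ℝ (gradient ψ) x w, v⟫ := by
  have hgrad : DifferentiableAt ℝ (gradient ψ) x :=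
    (contDiffAt_gradient hψ (by norm_num)).differentiableAt one_ne_zero
  have hfderiv : DifferentiableAt ℝ (fderiv ℝ ψ) x :=
    (hψ.fderiv_right (m := 1) (by norm_num)).differentiableAt one_ne_zero
  have hinner (a b : E) : ⟪fderiv ℝ (gradient ψ) x a, b⟫ = fderiv ℝ (fderiv ℝ ψ) x a b := by
    have h := hgrad.hasFDerivAt.inner ℝ (hasFDerivAt_const b x)
    simp only [inner_gradient_left] at h
    have h' := hfderiv.hasFDerivAt.clm_apply (hasFDerivAt_const b x)
    simpa using DFunLike.congr_fun (h.unique h') a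
  rw [hinner, hinner, (hψ.isSymmSndFDerivAt (by simp)).eq]

end Gradient

theorem continuousAt_indicator_pos {E : Type*} [TopologicalSpace E] {Ω : Set E} {f : E → ℝ} {x : E}
    (hΩ : IsOpen Ω) (hf : ContinuousOn f Ω) (hx : x ∈ Ω) (hfx : f x ≠ 0) :
    ContinuousAt ((Ω ∩ f ⁻¹' Ioi 0).indicator (1 : E → ℝ)) x := by
  have hnhds {U : Set ℝ} (hU : IsOpen U) (hxU : f x ∈ U) : Ω ∩ f ⁻¹' U ∈ 𝓝 x :=
    (hf.isOpen_inter_preimage hΩ hU).mem_nhds ⟨hx, hxU⟩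
  rcases hfx.lt_or_gt with hneg | hpos
  · refine (continuousAt_const (y := (0 : ℝ))).congr ?_
    filter_upwards [hnhds isOpen_Iio hneg] with y ⟨_, hy⟩
    exact (indicator_of_notMem (fun h ↦ lt_asymm (α := ℝ) hy h.2) _).symm
  · refine (continuousAt_const (y := (1 : ℝ))).congr ?_
    filter_upwards [hnhds isOpen_Ioi hpos] with y hy using (indicator_of_mem hy 1).symm

section WeakDerivative

open scoped Convolution

variable {E F : Type*} [NormedAddCommGroup E] [NormedSpace ℝ E] [MeasurableSpace E]
  [NormedAddCommGroup F] [NormedSpace ℝ F]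

/-- The distributional derivative of `g` in the direction `v` vanishes on `Ω`, tested against
real-valued `φ ∈ C_c^∞(Ω)`. The kinetic formulation says this of the indicators `1_{u·ξ > 0}` for
`v ⊥ ξ`. -/
def HasZeroWeakLineDeriv (g : E → F) (v : E) (Ω : Set E) (μ : Measure E) : Prop :=
  ∀ φ : E → ℝ, ContDiff ℝ (⊤ : ℕ∞) φ → HasCompactSupport φ → tsupport φ ⊆ Ω →
    ∫ x, fderiv ℝ φ x v • g x ∂μ = 0

namespace HasZeroWeakLineDeriv

variable {g : E → F} {v : E} {Ω : Set E} {μ : Measure E}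

theorem smul (h : HasZeroWeakLineDeriv g v Ω μ) (t : ℝ) :
    HasZeroWeakLineDeriv g (t • v) Ω μ := by
  intro φ hφ hφc hφΩ
  simp only [map_smul, smul_assoc, integral_smul, h φ hφ hφc hφΩ, smul_zero]

variable [BorelSpace E] [FiniteDimensional ℝ E] [μ.IsAddHaarMeasure]

theorem fderiv_convolution_apply_eq_zero (h : HasZeroWeakLineDeriv g v Ω μ)
    (hg : LocallyIntegrable g μ) {ρ : E → ℝ} (hρ : ContDiff ℝ (⊤ : ℕ∞) ρ)
    (hρc : HasCompactSupport ρ) {z : E} (hz : ∀ y, z - y ∈ tsupport ρ → y ∈ Ω) :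
    fderiv ℝ (ρ ⋆[ContinuousLinearMap.lsmul ℝ ℝ, μ] g) z v = 0 := by
  have hρ1 : ContDiff ℝ 1 ρ := hρ.of_le (by exact_mod_cast le_top)
  let φ : E → ℝ := fun y ↦ ρ (z - y)
  have hφ : ContDiff ℝ (⊤ : ℕ∞) φ := hρ.comp (contDiff_const.sub contDiff_id)
  have hφc : HasCompactSupport φ := hρc.comp_homeomorph (Homeomorph.subLeft z)
  have hφΩ : tsupport φ ⊆ Ω := fun y hy ↦
    hz y (tsupport_comp_subset_preimage ρ (continuous_const.sub continuous_id) hy)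
  have hφ' (y : E) : fderiv ℝ φ y v = -fderiv ℝ ρ (z - y) v := by
    have hρy : HasFDerivAt ρ _ (z - y) := (hρ1.differentiable one_ne_zero _).hasFDerivAt
    have hφy : HasFDerivAt φ _ y := hρy.comp y ((hasFDerivAt_id y).const_sub z)
    simp [hφy.fderiv]
  have hkey := h φ hφ hφc hφΩ
  simp only [hφ', neg_smul, integral_neg, neg_eq_zero] at hkey
  rw [← convolution_flip, (hρc.hasFDerivAt_convolution_right _ hg hρ1 z).fderiv,
    convolution_precompR_apply _ hg (hρc.fderiv ℝ) (hρ1.continuous_fderiv one_ne_zero)]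
  exact hkey

theorem convolution_eq_of_segment (h : HasZeroWeakLineDeriv g v Ω μ)
    (hg : LocallyIntegrable g μ) {ρ : E → ℝ} (hρ : ContDiff ℝ (⊤ : ℕ∞) ρ)
    (hρc : HasCompactSupport ρ) {a : E}
    (hseg : ∀ z ∈ segment ℝ a (a + v), ∀ y, z - y ∈ tsupport ρ → y ∈ Ω) :
    (ρ ⋆[ContinuousLinearMap.lsmul ℝ ℝ, μ] g) (a + v)
      = (ρ ⋆[ContinuousLinearMap.lsmul ℝ ℝ, μ] g) a := by
  refine eq_of_forall_mem_segment_fderiv_sub_eq_zero (fun z _ ↦ ?_) fun z hz ↦ ?_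
  · have hρ1 : ContDiff ℝ 1 ρ := hρ.of_le (by exact_mod_cast le_top)
    exact (hρc.hasFDerivAt_convolution_left _ hρ1 hg z).differentiableAt
  · rw [add_sub_cancel_left]
    exact h.fderiv_convolution_apply_eq_zero hg hρ hρc (hseg z hz)

theorem eq_of_segment_subset [CompleteSpace F] (h : HasZeroWeakLineDeriv g v Ω μ)
    (hg : LocallyIntegrable g μ) (hΩ : IsOpen Ω) {a : E} (hseg : segment ℝ a (a + v) ⊆ Ω)
    (ha : ContinuousAt g a) (hb : ContinuousAt g (a + v)) : g (a + v) = g a := by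
  let ρ (n : ℕ) : ContDiffBump (0 : E) :=
    ⟨1 / (n + 2), 1 / (n + 1), by positivity, by gcongr; norm_num⟩
  have hρ : Tendsto (fun n ↦ (ρ n).rOut) atTop (𝓝 0) := tendsto_one_div_add_atTop_nhds_zero_nat
  have hlim {x : E} (hx : ContinuousAt g x) :
      Tendsto (fun n ↦ ((ρ n).normed μ ⋆[ContinuousLinearMap.lsmul ℝ ℝ, μ] g) x) atTop (𝓝 (g x)) :=
    ContDiffBump.convolution_tendsto_right hρ (.of_forall fun _ ↦ hg.aestronglyMeasurable)
      (hx.tendsto.comp tendsto_snd) tendsto_const_nhds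
  have hcompact : IsCompact (segment ℝ a (a + v)) := by
    rw [segment_eq_image_lineMap]
    exact isCompact_Icc.image AffineMap.lineMap_continuous
  obtain ⟨δ, hδ, hδΩ⟩ := hcompact.exists_cthickening_subset_open hΩ hseg
  refine tendsto_nhds_unique_of_eventuallyEq (hlim hb) (hlim ha) ?_
  filter_upwards [hρ.eventually_le_const hδ] with n hn
  refine h.convolution_eq_of_segment hg (ρ n).contDiff_normed (ρ n).hasCompactSupport_normed ?_
  intro z hz y hy
  rw [(ρ n).tsupport_normed_eq, mem_closedBall_zero_iff, ← dist_eq_norm, dist_comm] at hy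
  exact hδΩ (mem_cthickening_of_dist_le y z δ _ hz (hy.trans hn))

theorem eq_zero_of_hasLineDerivAt_of_indicator_pos {f : E → ℝ} {x : E} {f' : ℝ}
    (h : HasZeroWeakLineDeriv ((Ω ∩ f ⁻¹' Ioi 0).indicator (1 : E → ℝ)) v Ω μ) (hΩ : IsOpen Ω)
    (hf : ContinuousOn f Ω) (hx : x ∈ Ω) (hfx : f x = 0) (hf' : HasLineDerivAt ℝ f f' x v) :
    f' = 0 := by
  by_contra hf'0
  have hsmall : Tendsto (fun t : ℝ ↦ x + t • v) (𝓝 0) (𝓝 x) :=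
    Continuous.tendsto' (by fun_prop) _ _ (by simp)
  obtain ⟨r, hr, hrΩ⟩ := Metric.isOpen_iff.1 hΩ x hx
  obtain ⟨ε, hε, hεball⟩ := Metric.eventually_nhds_iff_ball.1
    (hsmall.eventually (ball_mem_nhds x hr))
  obtain ⟨t, hsign, ht⟩ := ((eventually_mul_neg_of_hasDerivAt hf' (by simpa) hf'0).and
    (Ioo_mem_nhdsGT hε)).exists
  have hminus : x + -t • v ∈ ball x r := hεball _ (by simpa [abs_of_pos ht.1] using ht.2)
  have hplus : x + t • v ∈ ball x r := hεball _ (by simpa [abs_of_pos ht.1] using ht.2)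
  have hadd : x + -t • v + (2 * t) • v = x + t • v := by module
  have hseg : segment ℝ (x + -t • v) (x + -t • v + (2 * t) • v) ⊆ Ω := by
    rw [hadd]
    exact ((convex_ball x r).segment_subset hminus hplus).trans hrΩ
  have hmeas : MeasurableSet (Ω ∩ f ⁻¹' Ioi 0) :=
    (hf.isOpen_inter_preimage hΩ isOpen_Ioi).measurableSet
  have heq := (h.smul (2 * t)).eq_of_segment_subset
    ((locallyIntegrable_const (1 : ℝ)).indicator hmeas) hΩ hseg
    (continuousAt_indicator_pos hΩ hf (hrΩ hminus) (right_ne_zero_of_mul hsign.ne))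
    (hadd ▸ continuousAt_indicator_pos hΩ hf (hrΩ hplus) (left_ne_zero_of_mul hsign.ne))
  rw [hadd] at heq
  have hiff : x + t • v ∈ Ω ∩ f ⁻¹' Ioi 0 ↔ x + -t • v ∈ Ω ∩ f ⁻¹' Ioi 0 := by
    rw [← indicator_eq_one_iff_mem ℝ, heq, indicator_eq_one_iff_mem]
  rcases mul_neg_iff.1 hsign with ⟨h1, h2⟩ | ⟨h1, h2⟩
  · exact h2.not_gt (hiff.1 ⟨hrΩ hplus, h1⟩).2
  · exact h1.not_gt (hiff.2 ⟨hrΩ hminus, h2⟩).2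

end HasZeroWeakLineDeriv

end WeakDerivative

section Kinetic

variable {N : ℕ} {Ω : Set (EuclideanSpace ℝ (Fin N))}

namespace KineticFormulation

variable {u : EuclideanSpace ℝ (Fin N) → EuclideanSpace ℝ (Fin N)}
  {x v ξ : EuclideanSpace ℝ (Fin N)}

theorem hasZeroWeakLineDeriv (hkin : KineticFormulation Ω u) (hΩ : MeasurableSet Ω)
    (hvξ : ⟪v, ξ⟫ = 0) : HasZeroWeakLineDeriv ((Ω ∩ (fun x ↦ ⟪u x, ξ⟫) ⁻¹' Ioi 0).indicator
      (1 : EuclideanSpace ℝ (Fin N) → ℝ)) v Ω volume := by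
  intro φ hφ hφc hφΩ
  rcases eq_or_ne ξ 0 with rfl | hξ
  · simp
  have key := hkin (‖ξ‖⁻¹ • ξ) (norm_smul_inv_norm hξ) v (by simp [inner_smul_right, hvξ])
    φ hφ hφc hφΩ
  rw [← integral_indicator hΩ] at key
  refine Eq.trans (integral_congr_ae <| .of_forall fun y ↦ ?_) key
  by_cases hy : y ∈ Ω <;> simp [indicator, chi, hy, inner_gradient_right, inner_smul_right, hξ]

theorem inner_fderiv_apply_eq_zero (hkin : KineticFormulation Ω u) (hΩ : IsOpen Ω)
    (hu : ContinuousOn u Ω) (hx : x ∈ Ω) (hux : DifferentiableAt ℝ u x) (hxξ : ⟪u x, ξ⟫ = 0)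
    (hvξ : ⟪v, ξ⟫ = 0) : ⟪fderiv ℝ u x v, ξ⟫ = 0 := by
  have hderiv : HasFDerivAt (fun y ↦ ⟪u y, ξ⟫) _ x :=
    hux.hasFDerivAt.inner ℝ (hasFDerivAt_const ξ x)
  have hweak := hkin.hasZeroWeakLineDeriv hΩ.measurableSet hvξ
  simpa using hweak.eq_zero_of_hasLineDerivAt_of_indicator_pos hΩ (hu.inner continuousOn_const) hx
    hxξ (hderiv.hasLineDerivAt v)

variable {ψ : EuclideanSpace ℝ (Fin N) → ℝ}

theorem ker_fderiv_le_ker_fderiv_norm_sq_gradient (hkin : KineticFormulation Ω (gradient ψ))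
    (hΩ : IsOpen Ω) (hψ : ContDiffOn ℝ 2 ψ Ω) (hx : x ∈ Ω) :
    (fderiv ℝ ψ x).ker ≤ (fderiv ℝ (fun y ↦ ‖gradient ψ y‖ ^ 2) x).ker := by
  intro ξ hξ
  have hψ' {y} (hy : y ∈ Ω) : ContDiffAt ℝ 2 ψ y := hψ.contDiffAt (hΩ.mem_nhds hy)
  have hgrad {y} (hy : y ∈ Ω) : DifferentiableAt ℝ (gradient ψ) y :=
    (contDiffAt_gradient (hψ' hy) (by norm_num)).differentiableAt one_ne_zero
  have horth : ⟪gradient ψ x, ξ⟫ = 0 := by simpa [inner_gradient_left] using hξ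
  have hcomm : ⟪gradient ψ x, fderiv ℝ (gradient ψ) x ξ⟫ = 0 := by
    rw [real_inner_comm, inner_fderiv_gradient_comm (hψ' hx)]
    exact hkin.inner_fderiv_apply_eq_zero hΩ
      (fun y hy ↦ (hgrad hy).continuousAt.continuousWithinAt) hx (hgrad hx) horth horth
  simpa [(hgrad hx).hasFDerivAt.norm_sq.fderiv] using hcomm

theorem eventually_norm_gradient_eq (hkin : KineticFormulation Ω (gradient ψ)) (hΩ : IsOpen Ω)
    (hψ : ContDiffOn ℝ 2 ψ Ω) (hx : x ∈ Ω) (hψx : gradient ψ x ≠ 0) :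
    ∀ᶠ y in 𝓝[ψ ⁻¹' {ψ x}] x, ‖gradient ψ y‖ = ‖gradient ψ x‖ := by
  have hψ' {y} (hy : y ∈ Ω) : ContDiffAt ℝ 2 ψ y := hψ.contDiffAt (hΩ.mem_nhds hy)
  have hsq := eventually_eq_on_fiber_of_ker_fderiv_le (g := fun y ↦ ‖gradient ψ y‖ ^ 2)
    ((hψ' hx).of_le one_le_two) (range_fderiv_eq_top_of_gradient_ne_zero hψx) ?_ ?_
  · exact hsq.mono fun y hy ↦ (sq_eq_sq₀ (norm_nonneg _) (norm_nonneg _)).1 hy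
  · filter_upwards [hΩ.mem_nhds hx] with y hy
    exact ((contDiffAt_gradient (hψ' hy) (by norm_num)).differentiableAt one_ne_zero).norm_sq ℝ
  · filter_upwards [hΩ.mem_nhds hx] with y hy
    exact hkin.ker_fderiv_le_ker_fderiv_norm_sq_gradient hΩ hψ hy

end KineticFormulation

theorem gradient_norm_constant_on_level_set_general (hΩ : IsOpen Ω)
    {ψ : EuclideanSpace ℝ (Fin N) → ℝ} (hψ : ContDiffOn ℝ 2 ψ Ω)
    (hkin : KineticFormulation Ω (gradient ψ)) {α : ℝ} {S : Set (EuclideanSpace ℝ (Fin N))}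
    (hS : IsPreconnected S) (hSα : S ⊆ {x ∈ Ω | ψ x = α}) (hnv : ∀ x ∈ S, gradient ψ x ≠ 0) :
    ∃ c : ℝ, 0 < c ∧ ∀ x ∈ S, ‖gradient ψ x‖ = c := by
  rcases S.eq_empty_or_nonempty with rfl | ⟨x₀, hx₀⟩
  · exact ⟨1, one_pos, by simp⟩
  have hlocal : ∀ x ∈ S, ∀ᶠ y in 𝓝[S] x, ‖gradient ψ x‖ = ‖gradient ψ y‖ := by
    intro x hx
    have hfiber : S ⊆ ψ ⁻¹' {ψ x} := fun y hy ↦ (hSα hy).2.trans (hSα hx).2.symm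
    filter_upwards [nhdsWithin_mono x hfiber
      (hkin.eventually_norm_gradient_eq hΩ hψ (hSα hx).1 (hnv x hx))] with y hy using hy.symm
  refine ⟨‖gradient ψ x₀‖, norm_pos_iff.2 (hnv x₀ hx₀), fun x hx ↦ ?_⟩
  exact hS.induction₂ (fun x y ↦ ‖gradient ψ x‖ = ‖gradient ψ y‖) hlocal
    (fun _ _ _ _ _ _ ↦ Eq.trans) (fun _ _ _ _ ↦ Eq.symm) hx hx₀

end Kinetic

theorem gradient_norm_constant_on_level_set (N : ℕ) (hN : 2 ≤ N)
    (Ω : Set (EuclideanSpace ℝ (Fin N))) (hΩ : IsOpen Ω)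
    (ψ : EuclideanSpace ℝ (Fin N) → ℝ) (hψ : ContDiffOn ℝ (⊤ : ℕ∞) ψ Ω)
    (hkin : KineticFormulation Ω (fun x => gradient ψ x))
    (α : ℝ) (hnv : ∀ x ∈ Ω, ψ x = α → gradient ψ x ≠ 0)
    (S : Set (EuclideanSpace ℝ (Fin N))) (x₀ : EuclideanSpace ℝ (Fin N))
    (hx₀ : x₀ ∈ {x ∈ Ω | ψ x = α})
    (hS : S = connectedComponentIn {x ∈ Ω | ψ x = α} x₀) :
    ∃ c : ℝ, 0 < c ∧ ∀ x ∈ S, ‖gradient ψ x‖ = c := by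
  have hSα : S ⊆ {x ∈ Ω | ψ x = α} := hS ▸ connectedComponentIn_subset _ _
  exact gradient_norm_constant_on_level_set_general hΩ
    (hψ.of_le (WithTop.coe_le_coe.2 (le_top : (2 : ℕ∞) ≤ ⊤))) hkin
    (hS ▸ isPreconnected_connectedComponentIn) hSα fun x hx ↦ hnv x (hSα hx).1 (hSα hx).2
end
end
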